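/- arXiv:2406.18446 — 2 statements merged into one kernel-verified Lean document; each statement's English description precedes it below -/
import Mathlib

section
/- Let α, β > 0 and σ, γ ∈ ℝ, and define the weights v(z) = (1−|z|²)^γ exp(−α/(1−|z|²)^β) and ω(z) = (1−|z|²)^{2σ} exp(−2α/(1−|z|²)^β) on the unit disc. Then the Bergman projection P_ω is bounded from L^∞_v to H^∞_v: there exists C > 0 such that every measurable f with sup_{z∈𝔻} |f(z)| v(z) ≤ 1 satisfies that P_ω f is a well-defined analytic function on 𝔻 with sup_{z∈𝔻} |P_ω f(z)| v(z) ≤ C. -/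
open MeasureTheory Set Complex
open scoped ENNReal

noncomputable section

/-- The open unit disc in the complex plane. -/
def unitDisc : Set ℂ := Metric.ball 0 1

/-- Tail integral `ω̂(r) = ∫_r^1 ω(s) ds`. -/
def tl (ω : ℝ → ℝ) (r : ℝ) : ℝ := ∫ s in r..1, ω s

/-- Moment `ω_x = ∫_0^1 s^x ω(s) ds` (real power in the exponent). -/
def mom (ω : ℝ → ℝ) (x : ℝ) : ℝ := ∫ s in (0:ℝ)..1, s ^ x * ω s

/-- `ω` is a radial weight: nonnegative and integrable on `[0,1)`, with positive
tail integrals. -/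
def IsRadialWeight (ω : ℝ → ℝ) : Prop :=
  (∀ s ∈ Ico (0:ℝ) 1, 0 ≤ ω s) ∧ IntegrableOn ω (Ico (0:ℝ) 1) ∧
    ∀ r ∈ Ico (0:ℝ) 1, 0 < tl ω r

/-- The upper doubling class `D̂`: `sup_{0≤r<1} ω̂(r)/ω̂((1+r)/2) < ∞`. -/
def Dhat (ω : ℝ → ℝ) : Prop :=
  ∃ C : ℝ, ∀ r ∈ Ico (0:ℝ) 1, tl ω r ≤ C * tl ω ((1 + r) / 2)

/-- The class `Ď`: there are `K > 1`, `C > 1` with `ω̂(r) ≥ C ω̂(1 - (1-r)/K)`. -/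
def Dcheck (ω : ℝ → ℝ) : Prop :=
  ∃ K C : ℝ, 1 < K ∧ 1 < C ∧ ∀ r ∈ Ico (0:ℝ) 1, C * tl ω (1 - (1 - r) / K) ≤ tl ω r

/-- The class `D = D̂ ∩ Ď`. -/
def DD (ω : ℝ → ℝ) : Prop := Dhat ω ∧ Dcheck ω

/-- The Bergman reproducing kernel `B^ω_z(ζ) = Σ_n (conj z · ζ)^n / (2 ω_{2n+1})`. -/
def bKer (ω : ℝ → ℝ) (z ζ : ℂ) : ℂ :=
  ∑' n : ℕ, (starRingEnd ℂ z * ζ) ^ n / ((2 * mom ω (2 * (n : ℝ) + 1) : ℝ) : ℂ)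

/-- The integrand of the Bergman projection. -/
def bInt (ω : ℝ → ℝ) (f : ℂ → ℂ) (z ζ : ℂ) : ℂ :=
  f ζ * starRingEnd ℂ (bKer ω z ζ) * ((ω ‖ζ‖ : ℝ) : ℂ)

/-- The Bergman projection `P_ω f(z) = ∫_𝔻 f(ζ) conj(B^ω_z(ζ)) ω(ζ) dA(ζ)`,
where `dA` is normalized area measure `dx dy / π`. -/
def bProj (ω : ℝ → ℝ) (f : ℂ → ℂ) (z : ℂ) : ℂ :=
  (Real.pi : ℂ)⁻¹ * ∫ ζ in unitDisc, bInt ω f z ζ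

/-- The weighted sup-norm `ess sup_{z ∈ 𝔻} |f(z)| v(|z|)`, valued in `ℝ≥0∞`. -/
def wSup (v : ℝ → ℝ) (f : ℂ → ℂ) : ℝ≥0∞ :=
  essSup (fun z => ENNReal.ofReal (‖f z‖ * v ‖z‖)) (volume.restrict unitDisc)

/-- `P_ω : L^∞_v → H^∞_v` is bounded: there is `C > 0` so that for every
`f ∈ L^∞_v` the defining integral converges absolutely at every point of `𝔻`,
`P_ω f` is analytic on `𝔻`, and `‖P_ω f‖_{L^∞_v} ≤ C ‖f‖_{L^∞_v}`. -/
def ProjBddH (ω v : ℝ → ℝ) : Prop :=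
  ∃ C : ℝ, 0 < C ∧ ∀ f : ℂ → ℂ,
    AEStronglyMeasurable f (volume.restrict unitDisc) → wSup v f < ⊤ →
    (∀ z ∈ unitDisc, IntegrableOn (bInt ω f z) unitDisc) ∧
    DifferentiableOn ℂ (bProj ω f) unitDisc ∧
    wSup v (bProj ω f) ≤ ENNReal.ofReal C * wSup v f

/-- `P_ω : L^∞_v → B^∞_v` is bounded: there is `C > 0` so that for every
`f ∈ L^∞_v` the defining integral converges absolutely at every point of `𝔻`,
`P_ω f` is analytic on `𝔻`, and `‖P_ω f‖_{B^∞_v} ≤ C ‖f‖_{L^∞_v}`. -/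
def ProjBddB (ω v : ℝ → ℝ) : Prop :=
  ∃ C : ℝ, 0 < C ∧ ∀ f : ℂ → ℂ,
    AEStronglyMeasurable f (volume.restrict unitDisc) → wSup v f < ⊤ →
    (∀ z ∈ unitDisc, IntegrableOn (bInt ω f z) unitDisc) ∧
    DifferentiableOn ℂ (bProj ω f) unitDisc ∧
    ∀ z ∈ unitDisc,
      ENNReal.ofReal ((1 - ‖z‖) * v ‖z‖ * ‖deriv (bProj ω f) z‖) ≤
        ENNReal.ofReal C * wSup v f

/-- The moment condition `sup_{x ≥ 0} (ν_x / ω_{2x}) (ω/ν̂)_x < ∞`. -/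
def MomCond (ω ν : ℝ → ℝ) : Prop :=
  ∃ C : ℝ, ∀ x : ℝ, 0 ≤ x →
    mom ν x / mom ω (2 * x) * mom (fun s => ω s / tl ν s) x ≤ C

/-- The tail condition `sup_{0 ≤ r < 1} (ν̂(r)/ω̂(r)) ∫_r^1 ω(s)/ν̂(s) ds < ∞`. -/
def TailCond (ω ν : ℝ → ℝ) : Prop :=
  ∃ C : ℝ, ∀ r ∈ Ico (0:ℝ) 1, tl ν r / tl ω r * tl (fun s => ω s / tl ν s) r ≤ C

/-!
The bound is a Schur test for `|B^ω_z(ζ)| ω(ζ) / v(ζ)`. In polar coordinates, with `x = |z|²` and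
`y = |ζ|²`, it concerns `∫∫ |∑ ρⁿ e^{inθ} / mₙ| dθ dy` with suitable weights in `x` and `y`, where
`ρ = √(xy)` and `mₙ = ∫₀¹ uⁿ W(u) du`, `W(|z|²) = ω(z)`. The inequality `a ≤ a² b + b⁻¹` with
`b = (1 + ((x - y) / t)²) (t² + |1 - e^{iθ}|²)`, `t = (1 - x)^{1 + β/2}`, replaces the absolute
value by a square: the integral of `b⁻¹` is bounded because of the choice of `t`, and by Parseval
the `θ`-integral of the square is the energy `∑ t² cₙ² + (cₙ₊₁ - cₙ)²` of the coefficients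
`cₙ = ρⁿ / mₙ`.

Laplace's method estimates this energy. The function `uⁿ W(u)` has a peak at some `1 - dₙ`, and
is concentrated there on the scale `dₙ^{1 + β/2}`; the variance of `uⁿ W(u) du` around `ρ` controls
`cₙ₊₁ - cₙ`. After integration in `y`, the `n`-th term is at most a multiple of a Cauchy
density in `n`, centred at the index whose peak is `x`, so the sum over `n` is bounded.
-/

/-- The symmetric quantity `r + 1/r`, whose integer powers dominate all real powers of `r`. -/
def ratioSum (r : ℝ) : ℝ := r + r⁻¹

lemma le_ratioSum {r : ℝ} (hr : 0 < r) : r ≤ ratioSum r :=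
  le_add_of_nonneg_right (inv_pos.mpr hr).le

lemma inv_le_ratioSum {r : ℝ} (hr : 0 < r) : r⁻¹ ≤ ratioSum r :=
  le_add_of_nonneg_left hr.le

lemma one_le_ratioSum {r : ℝ} (hr : 0 < r) : 1 ≤ ratioSum r := by
  rcases le_total 1 r with h | h
  · exact h.trans (le_ratioSum hr)
  · exact ((one_le_inv₀ hr).mpr h).trans (inv_le_ratioSum hr)

lemma rpow_le_ratioSum_pow {r a : ℝ} {M : ℕ} (hr : 0 < r) (hM : |a| ≤ M) :
    r ^ a ≤ ratioSum r ^ M := by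
  have hR := one_le_ratioSum hr
  calc r ^ a ≤ ratioSum r ^ |a| := by
        rcases le_total 0 a with h | h
        · rw [abs_of_nonneg h]
          exact Real.rpow_le_rpow hr.le (le_ratioSum hr) h
        · rw [abs_of_nonpos h, ← inv_inv r, Real.inv_rpow (inv_pos.mpr hr).le,
            ← Real.rpow_neg (inv_pos.mpr hr).le, inv_inv r]
          exact Real.rpow_le_rpow (inv_pos.mpr hr).le (inv_le_ratioSum hr) (neg_nonneg.mpr h)
    _ ≤ ratioSum r ^ (M : ℝ) := Real.rpow_le_rpow_of_exponent_le hR hM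
    _ = ratioSum r ^ M := Real.rpow_natCast _ _

/-- The defect `r⁻ᵝ - (1 - β (r - 1))` in Bernoulli's inequality for the convex function `r⁻ᵝ`. -/
def bernoulliDefect (β r : ℝ) : ℝ := r ^ (-β) - 1 + β * (r - 1)

lemma sq_le_bernoulliDefect {β r : ℝ} (hβ : 0 ≤ β) (hr : 0 < r) :
    β * (r - 1) ^ 2 / (2 * (1 + r)) ≤ bernoulliDefect β r := by
  obtain ⟨s, hs, rfl⟩ : ∃ s, 0 < s ∧ s ^ 2 = r := ⟨√r, Real.sqrt_pos.mpr hr, Real.sq_sqrt hr.le⟩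
  have hlog : Real.log (s ^ 2) ≤ 2 * (s - 1) := by
    rw [Real.log_pow]
    exact mul_le_mul_of_nonneg_left (Real.log_le_sub_one_of_pos hs) (by norm_num)
  have hexp : 1 - β * Real.log (s ^ 2) ≤ (s ^ 2) ^ (-β) := by
    rw [Real.rpow_def_of_pos hr]
    linarith [Real.add_one_le_exp (Real.log (s ^ 2) * -β)]
  have hsq : (s ^ 2 - 1) ^ 2 / (2 * (1 + s ^ 2)) ≤ (s - 1) ^ 2 := by
    rw [div_le_iff₀ (by positivity)]
    nlinarith [sq_nonneg ((s - 1) * (s - 1))]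
  calc β * (s ^ 2 - 1) ^ 2 / (2 * (1 + s ^ 2)) ≤ β * (s - 1) ^ 2 := by
        rw [mul_div_assoc]; gcongr
    _ = -(β * (2 * (s - 1))) + β * (s ^ 2 - 1) := by ring
    _ ≤ bernoulliDefect β (s ^ 2) := by
        unfold bernoulliDefect
        linarith [mul_le_mul_of_nonneg_left hlog hβ]

lemma bernoulliDefect_nonneg {β r : ℝ} (hβ : 0 ≤ β) (hr : 0 < r) : 0 ≤ bernoulliDefect β r :=
  (by positivity : (0 : ℝ) ≤ β * (r - 1) ^ 2 / (2 * (1 + r))).trans (sq_le_bernoulliDefect hβ hr)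

lemma mul_one_sub_le_rpow_neg_sub_one {b r : ℝ} (hb : 0 ≤ b) (hr : 0 < r) :
    b * (1 - r) ≤ r ^ (-b) - 1 := by
  have := bernoulliDefect_nonneg hb hr
  unfold bernoulliDefect at this
  linarith

lemma rpow_neg_sub_one_le {b r : ℝ} (hb : 0 ≤ b) (hr : 0 < r) :
    r ^ (-b) - 1 ≤ b * r ^ (-(b + 1)) * (1 - r) := by
  have h := mul_le_mul_of_nonneg_left (mul_one_sub_le_rpow_neg_sub_one hb (inv_pos.mpr hr))
    (Real.rpow_nonneg hr.le (-b))
  have hinv : r⁻¹ ^ (-b) = (r ^ (-b))⁻¹ := Real.inv_rpow hr.le _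
  have hne : r ^ (-b) ≠ 0 := (Real.rpow_pos_of_pos hr _).ne'
  have hsucc : r ^ (-(b + 1)) = r ^ (-b) * r⁻¹ := by
    rw [neg_add, Real.rpow_add hr, Real.rpow_neg_one]
  rw [hinv, mul_sub _ _ (1 : ℝ), mul_inv_cancel₀ hne] at h
  rw [hsucc]
  have : r⁻¹ * r = 1 := inv_mul_cancel₀ hr.ne'
  linear_combination h + b * r ^ (-b) * this

lemma abs_rpow_neg_sub_one_le {b r : ℝ} (hb : 0 ≤ b) (hr : 0 < r) :
    |r ^ (-b) - 1| ≤ b * |r - 1| * ratioSum r ^ ⌈b + 1⌉₊ := by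
  have hlow := mul_one_sub_le_rpow_neg_sub_one hb hr
  have hupp := rpow_neg_sub_one_le hb hr
  rcases le_total 1 r with h | h
  · have hle : r ^ (-b) ≤ 1 := Real.rpow_le_one_of_one_le_of_nonpos h (neg_nonpos.mpr hb)
    rw [abs_of_nonpos (sub_nonpos.mpr hle), abs_of_nonneg (sub_nonneg.mpr h)]
    calc -(r ^ (-b) - 1) ≤ b * (r - 1) * 1 := by linarith
      _ ≤ b * (r - 1) * ratioSum r ^ ⌈b + 1⌉₊ := by
          have := sub_nonneg.mpr h
          gcongr
          exact one_le_pow₀ (one_le_ratioSum hr)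
  · have h' := sub_nonneg.mpr h
    rw [abs_of_nonneg ((mul_nonneg hb h').trans hlow), abs_of_nonpos (sub_nonpos.mpr h), neg_sub]
    calc r ^ (-b) - 1 ≤ b * (1 - r) * r ^ (-(b + 1)) := by linarith
      _ ≤ b * (1 - r) * ratioSum r ^ ⌈b + 1⌉₊ := by
          gcongr
          apply rpow_le_ratioSum_pow hr
          rw [abs_neg, abs_of_nonneg (by linarith)]
          exact Nat.le_ceil _

lemma bernoulliDefect_le_sq {β r : ℝ} (hβ : 0 ≤ β) (hr : 0 < r) (hr1 : r ≤ 1) :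
    bernoulliDefect β r ≤ β * (β + 1) * r ^ (-(β + 2)) * (1 - r) ^ 2 := by
  have h₁ := rpow_neg_sub_one_le hβ hr
  have h₂ : r ^ (-(β + 1)) - 1 ≤ (β + 1) * r ^ (-(β + 2)) * (1 - r) := by
    have := rpow_neg_sub_one_le (b := β + 1) (by linarith) hr
    rwa [add_assoc, one_add_one_eq_two] at this
  calc bernoulliDefect β r ≤ β * (1 - r) * (r ^ (-(β + 1)) - 1) := by
        unfold bernoulliDefect; linarith
    _ ≤ β * (1 - r) * ((β + 1) * r ^ (-(β + 2)) * (1 - r)) := by gcongr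
    _ = β * (β + 1) * r ^ (-(β + 2)) * (1 - r) ^ 2 := by ring

lemma exists_ratioSum_le_bernoulliDefect {β : ℝ} (hβ : 0 < β) :
    ∃ C : ℝ, 0 < C ∧ ∃ k : ℕ, ∀ r : ℝ, 0 < r →
      ratioSum r ≤ C * (1 + bernoulliDefect β r) ^ k := by
  set k := ⌈β⁻¹⌉₊
  refine ⟨(1 + β⁻¹) * (1 + β) ^ k, by positivity, k, fun r hr => ?_⟩
  have hD := bernoulliDefect_nonneg hβ.le hr
  set s := 1 + β + bernoulliDefect β r with hs
  have hpow : 0 < r ^ (-β) := Real.rpow_pos_of_pos hr _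
  have hs1 : 1 ≤ s := by linarith
  have hk : k ≠ 0 := (Nat.ceil_pos.mpr (inv_pos.mpr hβ)).ne'
  have hr_le : r ≤ β⁻¹ * s ^ k := by
    have : β * r ≤ s := by rw [hs, bernoulliDefect]; linarith
    calc r = β⁻¹ * (β * r) := by field_simp
      _ ≤ β⁻¹ * s ^ k := by gcongr; exact this.trans (le_self_pow₀ hs1 hk)
  have hinv_le : r⁻¹ ≤ s ^ k := by
    have : r ^ (-β) ≤ s := by rw [hs, bernoulliDefect]; nlinarith
    calc r⁻¹ = (r ^ (-β)) ^ β⁻¹ := by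
          rw [← Real.rpow_mul hr.le, neg_mul, mul_inv_cancel₀ hβ.ne', Real.rpow_neg_one]
      _ ≤ s ^ β⁻¹ := by gcongr
      _ ≤ s ^ (k : ℝ) := Real.rpow_le_rpow_of_exponent_le hs1 (Nat.le_ceil _)
      _ = s ^ k := Real.rpow_natCast _ _
  calc ratioSum r ≤ (1 + β⁻¹) * s ^ k := by rw [ratioSum]; linarith
    _ ≤ (1 + β⁻¹) * ((1 + β) * (1 + bernoulliDefect β r)) ^ k := by
        gcongr; nlinarith
    _ = (1 + β⁻¹) * (1 + β) ^ k * (1 + bernoulliDefect β r) ^ k := by rw [mul_pow]; ring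

lemma exists_ratioSum_mul_le_bernoulliDefect {β : ℝ} (hβ : 0 < β) :
    ∃ C : ℝ, 0 < C ∧ ∃ k : ℕ, ∀ r L : ℝ, 0 < r → 1 ≤ L →
      ratioSum r * (1 + L * (r - 1) ^ 2) ≤ C * (1 + L * bernoulliDefect β r) ^ k := by
  obtain ⟨C, hC, k, h⟩ := exists_ratioSum_le_bernoulliDefect hβ
  refine ⟨C ^ 2 * (1 + 4 / β), by positivity, 2 * k + 1, fun r L hr hL => ?_⟩
  have hD := bernoulliDefect_nonneg hβ.le hr
  have hR := one_le_ratioSum hr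
  set D := bernoulliDefect β r
  have hDL : D ≤ L * D := le_mul_of_one_le_left hD hL
  have hsq : (r - 1) ^ 2 ≤ 4 / β * ratioSum r * D := by
    have := sq_le_bernoulliDefect hβ.le hr
    rw [div_le_iff₀ (by linarith)] at this
    rw [div_mul_eq_mul_div, div_mul_eq_mul_div, le_div_iff₀ hβ]
    nlinarith [le_ratioSum hr]
  have hquad : 1 + L * (r - 1) ^ 2 ≤ ratioSum r * ((1 + 4 / β) * (1 + L * D)) := by
    have hβ4 : 0 < 4 / β := by positivity
    calc 1 + L * (r - 1) ^ 2 ≤ ratioSum r * 1 + L * (4 / β * ratioSum r * D) := by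
          gcongr; linarith
      _ = ratioSum r * (1 + 4 / β * (L * D)) := by ring
      _ ≤ ratioSum r * ((1 + 4 / β) * (1 + L * D)) := by gcongr; nlinarith
  calc ratioSum r * (1 + L * (r - 1) ^ 2)
      ≤ ratioSum r * (ratioSum r * ((1 + 4 / β) * (1 + L * D))) := by gcongr
    _ = ratioSum r ^ 2 * ((1 + 4 / β) * (1 + L * D)) := by ring
    _ ≤ (C * (1 + L * D) ^ k) ^ 2 * ((1 + 4 / β) * (1 + L * D)) := by
        gcongr
        exact (h r hr).trans (by gcongr)
    _ = C ^ 2 * (1 + 4 / β) * (1 + L * D) ^ (2 * k + 1) := by ring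

lemma exists_pow_mul_exp_neg_le (N : ℕ) {b : ℝ} (hb : 0 < b) :
    ∃ C : ℝ, 0 < C ∧ ∀ s : ℝ, 0 ≤ s → s ^ N * Real.exp (-(b * s)) ≤ C := by
  refine ⟨N.factorial / b ^ N, by positivity, fun s hs => ?_⟩
  have h := Real.pow_div_factorial_le_exp (b * s) (by positivity) N
  rw [div_le_iff₀ (by positivity), mul_pow] at h
  rw [Real.exp_neg, ← div_eq_mul_inv, div_le_div_iff₀ (by positivity) (by positivity)]
  linarith

lemma exists_rpow_mul_exp_neg_le (a : ℝ) {b β : ℝ} (hb : 0 < b) (hβ : 0 < β) :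
    ∃ C : ℝ, 0 < C ∧ ∀ δ : ℝ, 0 < δ → δ ≤ 1 → δ ^ a * Real.exp (-(b * δ ^ (-β))) ≤ C := by
  obtain ⟨C, hC, h⟩ := exists_pow_mul_exp_neg_le ⌈|a| / β⌉₊ hb
  refine ⟨C, hC, fun δ h0 h1 => le_trans ?_ (h (δ ^ (-β)) (by positivity))⟩
  gcongr
  rw [← Real.rpow_natCast, ← Real.rpow_mul h0.le]
  apply Real.rpow_le_rpow_of_exponent_ge h0 h1
  have := (div_le_iff₀ hβ).mp (Nat.le_ceil (|a| / β))
  linarith [neg_abs_le a]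

lemma exists_ratioSum_mul_pow_mul_exp_le {b β : ℝ} (M : ℕ) (hb : 0 < b) (hβ : 0 < β) :
    ∃ C : ℝ, 0 < C ∧ ∀ r L : ℝ, 0 < r → 1 ≤ L →
      (ratioSum r * (1 + L * (r - 1) ^ 2)) ^ M *
        Real.exp (-(b * (L * bernoulliDefect β r))) ≤ C := by
  obtain ⟨C₁, hC₁, k, h₁⟩ := exists_ratioSum_mul_le_bernoulliDefect hβ
  obtain ⟨C₂, hC₂, h₂⟩ := exists_pow_mul_exp_neg_le (k * M) hb
  refine ⟨C₁ ^ M * (C₂ * Real.exp b), by positivity, fun r L hr hL => ?_⟩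
  have hR := one_le_ratioSum hr
  have hLD : 0 ≤ L * bernoulliDefect β r :=
    mul_nonneg (by linarith) (bernoulliDefect_nonneg hβ.le hr)
  set s := 1 + L * bernoulliDefect β r with hs
  have hexp : Real.exp (-(b * (L * bernoulliDefect β r))) = Real.exp (-(b * s)) * Real.exp b := by
    rw [← Real.exp_add, hs]; ring_nf
  calc (ratioSum r * (1 + L * (r - 1) ^ 2)) ^ M * Real.exp (-(b * (L * bernoulliDefect β r)))
      ≤ (C₁ * s ^ k) ^ M * (Real.exp (-(b * s)) * Real.exp b) := by
        rw [hexp]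
        gcongr ?_ ^ M * _
        exact h₁ r L hr hL
    _ = C₁ ^ M * (s ^ (k * M) * Real.exp (-(b * s)) * Real.exp b) := by
        rw [mul_pow, pow_mul]; ring
    _ ≤ C₁ ^ M * (C₂ * Real.exp b) := by gcongr; exact h₂ s (by linarith)

/-- The exponential weight `(1 - u)ˢ exp (-A / (1 - u)ᵝ)`. With `u = |z|²` it covers both weights of
the theorem as well as the quotients and products of such weights. -/
def expWeight (β A s u : ℝ) : ℝ := (1 - u) ^ s * Real.exp (-A / (1 - u) ^ β)

section ExpWeight

variable {β A B s t u : ℝ}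

lemma expWeight_pos (hu : u < 1) : 0 < expWeight β A s u :=
  mul_pos (Real.rpow_pos_of_pos (sub_pos.mpr hu) _) (Real.exp_pos _)

lemma measurable_expWeight : Measurable (expWeight β A s) := by
  unfold expWeight; fun_prop

lemma expWeight_eq_rpow_neg (hu : u < 1) :
    expWeight β A s u = (1 - u) ^ s * Real.exp (-(A * (1 - u) ^ (-β))) := by
  rw [expWeight, Real.rpow_neg (sub_nonneg.mpr hu.le), neg_div, div_eq_mul_inv]

lemma expWeight_mul_expWeight (hu : u < 1) :
    expWeight β A s u * expWeight β B t u = expWeight β (A + B) (s + t) u := by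
  simp only [expWeight, neg_add, add_div, Real.exp_add, Real.rpow_add (sub_pos.mpr hu)]
  ring

lemma expWeight_sq (hu : u < 1) :
    expWeight β A s u ^ 2 = expWeight β (2 * A) (2 * s) u := by
  rw [sq, expWeight_mul_expWeight hu, two_mul, two_mul]

lemma rpow_mul_expWeight (hu : u < 1) :
    (1 - u) ^ t * expWeight β A s u = expWeight β A (s + t) u := by
  rw [expWeight, expWeight, add_comm, Real.rpow_add (sub_pos.mpr hu), mul_assoc]

lemma exists_expWeight_le (s : ℝ) (hβ : 0 < β) (hA : 0 < A) :
    ∃ C : ℝ, 0 < C ∧ ∀ u ∈ Ico (0 : ℝ) 1, expWeight β A s u ≤ C := by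
  obtain ⟨C, hC, h⟩ := exists_rpow_mul_exp_neg_le s hA hβ
  refine ⟨C, hC, fun u hu => ?_⟩
  rw [expWeight_eq_rpow_neg hu.2]
  exact h _ (sub_pos.mpr hu.2) (sub_le_self _ hu.1)

end ExpWeight

/-- The scale `d ^ (1 + β / 2)` on which `uⁿ expWeight β A s u` is concentrated around its peak at
distance `d` from the boundary point `1`. -/
def peakWidth (β d : ℝ) : ℝ := d ^ (1 + β / 2)

/-- The (real) exponent `n` for which `uⁿ exp (-A / (1 - u)ᵝ)` has its critical point at
`u = 1 - d`. -/
def peakIndex (β A d : ℝ) : ℝ := A * β * (1 - d) * d ^ (-(β + 1))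

/-- `uⁿ exp (-A / (1 - u)ᵝ)` peaks at `u = 1 - d`. -/
def IsPeak (β A : ℝ) (n : ℕ) (d : ℝ) : Prop := d ∈ Ioc (0 : ℝ) 1 ∧ peakIndex β A d = n

/-- A quantity `≥ 1` measuring how far the distance `δ` is from the peak distance `d`, both in ratio
and in units of the peak width. -/
def peakDeviation (β d δ : ℝ) : ℝ := ratioSum (δ / d) * (1 + ((δ - d) / peakWidth β d) ^ 2)

section Peak

variable {β A d δ : ℝ}

lemma peakWidth_pos (hd : 0 < d) : 0 < peakWidth β d := Real.rpow_pos_of_pos hd _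

lemma peakWidth_le_self (hβ : 0 ≤ β) (hd : d ∈ Ioc (0 : ℝ) 1) : peakWidth β d ≤ d :=
  (Real.rpow_le_rpow_of_exponent_ge hd.1 hd.2 (by linarith)).trans_eq (Real.rpow_one d)

lemma peakWidth_le_one (hβ : 0 ≤ β) (hd : d ∈ Ioc (0 : ℝ) 1) : peakWidth β d ≤ 1 :=
  (peakWidth_le_self hβ hd).trans hd.2

lemma sq_peakWidth_mul_rpow_neg (hd : 0 < d) : peakWidth β d ^ 2 * d ^ (-β) = d ^ 2 := by
  rw [peakWidth, ← Real.rpow_natCast, ← Real.rpow_mul hd.le, ← Real.rpow_add hd,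
    ← Real.rpow_natCast]
  congr 1; push_cast; ring

lemma exists_isPeak (hβ : 0 < β) (hA : 0 < A) (n : ℕ) : ∃ d, IsPeak β A n d := by
  have hAβ : 0 < A * β := mul_pos hA hβ
  set e : ℝ := min (1 / 2) (A * β / (2 * (n + 1)))
  have he : 0 < e := by positivity
  have he_half : e ≤ 1 / 2 := min_le_left _ _
  have hn_le : (n : ℝ) ≤ peakIndex β A e := by
    have he_inv : e⁻¹ ≤ e ^ (-(β + 1)) := by
      rw [← Real.rpow_neg_one]
      exact Real.rpow_le_rpow_of_exponent_ge he (by linarith) (by linarith)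
    have hn_e : (n + 1 : ℝ) * e ≤ A * β / 2 := by
      have := (le_div_iff₀ (by positivity)).mp (min_le_right (1 / 2) (A * β / (2 * (n + 1 : ℝ))))
      linarith
    calc (n : ℝ) ≤ (n + 1) * e * e⁻¹ := by rw [mul_inv_cancel_right₀ he.ne']; linarith
      _ ≤ A * β * (1 - e) * e ^ (-(β + 1)) :=
          mul_le_mul (by nlinarith) he_inv (by positivity) (mul_nonneg hAβ.le (by linarith))
  have hcont : ContinuousOn (peakIndex β A) (Icc e 1) := fun x hx =>
    (ContinuousAt.mul (by fun_prop) (Real.continuousAt_rpow_const _ _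
      (Or.inl (he.trans_le hx.1).ne'))).continuousWithinAt
  obtain ⟨d, hd, hdn⟩ := intermediate_value_Icc' (by linarith) hcont
    (show (n : ℝ) ∈ Icc _ _ from ⟨by simp [peakIndex], hn_le⟩)
  exact ⟨d, ⟨he.trans_le hd.1, hd.2⟩, hdn⟩

lemma rpow_neg_add_one (hd : 0 < d) (β : ℝ) : d ^ (-(β + 1)) = d ^ (-β) / d := by
  rw [neg_add, Real.rpow_add hd, Real.rpow_neg_one, div_eq_mul_inv]

lemma rpow_neg_mul_sq_sub_one (hd : 0 < d) :
    d ^ (-β) * (δ / d - 1) ^ 2 = ((δ - d) / peakWidth β d) ^ 2 := by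
  rw [div_pow, eq_div_iff (pow_pos (peakWidth_pos hd) 2).ne', div_sub_one hd.ne', div_pow,
    ← mul_div_assoc, div_mul_eq_mul_div, div_eq_iff (pow_pos hd 2).ne']
  linear_combination (δ - d) ^ 2 * sq_peakWidth_mul_rpow_neg (β := β) hd

lemma ratioSum_le_peakDeviation (hd : 0 < d) (hδ : 0 < δ) :
    ratioSum (δ / d) ≤ peakDeviation β d δ :=
  le_mul_of_one_le_right (zero_le_one.trans (one_le_ratioSum (div_pos hδ hd)))
    (le_add_of_nonneg_right (sq_nonneg _))

lemma one_le_peakDeviation (hd : 0 < d) (hδ : 0 < δ) : 1 ≤ peakDeviation β d δ :=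
  (one_le_ratioSum (div_pos hδ hd)).trans (ratioSum_le_peakDeviation hd hδ)

lemma one_add_sq_le_peakDeviation (hd : 0 < d) (hδ : 0 < δ) :
    1 + ((δ - d) / peakWidth β d) ^ 2 ≤ peakDeviation β d δ :=
  le_mul_of_one_le_left (by positivity) (one_le_ratioSum (div_pos hδ hd))

lemma sq_sub_le_sq_peakWidth_mul_peakDeviation (hd : 0 < d) (hδ : 0 < δ) :
    (δ - d) ^ 2 ≤ peakWidth β d ^ 2 * peakDeviation β d δ := by
  have h := one_add_sq_le_peakDeviation (β := β) hd hδ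
  rw [← div_le_iff₀' (pow_pos (peakWidth_pos hd) 2), ← div_pow]
  linarith

lemma measurable_peakDeviation : Measurable (peakDeviation β d) := by
  unfold peakDeviation ratioSum
  fun_prop

lemma rpow_div_le_peakDeviation_pow {a : ℝ} {M : ℕ} (hd : 0 < d) (hδ : 0 < δ) (hM : |a| ≤ M) :
    (δ / d) ^ a ≤ peakDeviation β d δ ^ M := by
  have hr := div_pos hδ hd
  exact (rpow_le_ratioSum_pow hr hM).trans (pow_le_pow_left₀
    (zero_le_one.trans (one_le_ratioSum hr)) (ratioSum_le_peakDeviation hd hδ) M)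

lemma exists_peakDeviation_pow_mul_exp_le {b : ℝ} (hβ : 0 < β) (hb : 0 < b) (M : ℕ) :
    ∃ C : ℝ, 0 < C ∧ ∀ d ∈ Ioc (0 : ℝ) 1, ∀ δ : ℝ, 0 < δ →
      peakDeviation β d δ ^ M *
        Real.exp (-(b * (d ^ (-β) * bernoulliDefect β (δ / d)))) ≤ C := by
  obtain ⟨C, hC, h⟩ := exists_ratioSum_mul_pow_mul_exp_le M hb hβ
  refine ⟨C, hC, fun d hd δ hδ => ?_⟩
  rw [peakDeviation, ← rpow_neg_mul_sq_sub_one hd.1]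
  exact h _ _ (div_pos hδ hd.1)
    (Real.one_le_rpow_of_pos_of_le_one_of_nonpos hd.1 hd.2 (neg_nonpos.mpr hβ.le))

lemma peakWidth_left_le_peakDeviation_pow_mul (hβ : 0 ≤ β) (hd : 0 < d) (hδ : 0 < δ) :
    peakWidth β d ≤ peakDeviation β d δ ^ ⌈1 + β / 2⌉₊ * peakWidth β δ := by
  have h := rpow_div_le_peakDeviation_pow (β := β) (a := -(1 + β / 2)) hd hδ
    ((abs_neg _).trans_le ((abs_of_nonneg (by positivity)).trans_le (Nat.le_ceil _)))
  rw [Real.rpow_neg (div_pos hδ hd).le, Real.div_rpow hδ.le hd.le, inv_div] at h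
  exact (div_le_iff₀ (peakWidth_pos hδ)).mp h

lemma peakWidth_right_le_peakDeviation_pow_mul (hβ : 0 ≤ β) (hd : 0 < d) (hδ : 0 < δ) :
    peakWidth β δ ≤ peakDeviation β d δ ^ ⌈1 + β / 2⌉₊ * peakWidth β d := by
  have h := rpow_div_le_peakDeviation_pow (β := β) (a := 1 + β / 2) hd hδ
    ((abs_of_nonneg (by positivity)).trans_le (Nat.le_ceil _))
  rw [Real.div_rpow hδ.le hd.le] at h
  exact (div_le_iff₀ (peakWidth_pos hd)).mp h

lemma peakIndex_eq_sub (hd : 0 < d) :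
    peakIndex β A d = A * β * (d ^ (-(β + 1)) - d ^ (-β)) := by
  rw [peakIndex, rpow_neg_add_one hd]
  field_simp

lemma abs_peakIndex_sub_le (hβ : 0 ≤ β) (hA : 0 ≤ A) (hd : d ∈ Ioc (0 : ℝ) 1) (hδ : 0 < δ) :
    |peakIndex β A d - peakIndex β A δ| ≤
      A * β * (2 * β + 1) * d ^ (-(β + 1)) * |δ / d - 1| * ratioSum (δ / d) ^ ⌈β + 2⌉₊ := by
  have hscale : ∀ b : ℝ, d ^ (-b) * ((δ / d) ^ (-b) - 1) = δ ^ (-b) - d ^ (-b) := fun b => by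
    have := (Real.rpow_pos_of_pos hd.1 (-b)).ne'
    rw [Real.div_rpow hδ.le hd.1.le]
    field_simp
  have hr := div_pos hδ hd.1
  have hmono : d ^ (-β) ≤ d ^ (-(β + 1)) :=
    Real.rpow_le_rpow_of_exponent_ge hd.1 hd.2 (by linarith)
  set r := δ / d
  have h₀ : |r ^ (-β) - 1| ≤ β * |r - 1| * ratioSum r ^ ⌈β + 2⌉₊ :=
    (abs_rpow_neg_sub_one_le hβ hr).trans (by
      have := one_le_ratioSum hr
      gcongr
      · linarith)
  have h₁ : |r ^ (-(β + 1)) - 1| ≤ (β + 1) * |r - 1| * ratioSum r ^ ⌈β + 2⌉₊ := by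
    have := abs_rpow_neg_sub_one_le (b := β + 1) (by linarith) hr
    rwa [add_assoc, one_add_one_eq_two] at this
  have hsplit : peakIndex β A d - peakIndex β A δ =
      A * β * (d ^ (-β) * (r ^ (-β) - 1) - d ^ (-(β + 1)) * (r ^ (-(β + 1)) - 1)) := by
    rw [peakIndex_eq_sub hd.1, peakIndex_eq_sub hδ, hscale, hscale]
    ring
  have hd₀ : 0 < d ^ (-β) := Real.rpow_pos_of_pos hd.1 _
  have hd₁ : 0 < d ^ (-(β + 1)) := Real.rpow_pos_of_pos hd.1 _
  rw [hsplit, abs_mul, abs_of_nonneg (by positivity)]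
  calc A * β * |d ^ (-β) * (r ^ (-β) - 1) - d ^ (-(β + 1)) * (r ^ (-(β + 1)) - 1)|
      ≤ A * β * (d ^ (-β) * |r ^ (-β) - 1| + d ^ (-(β + 1)) * |r ^ (-(β + 1)) - 1|) := by
        gcongr
        refine (abs_sub _ _).trans_eq ?_
        rw [abs_mul, abs_mul, abs_of_pos hd₀, abs_of_pos hd₁]
    _ ≤ A * β * (d ^ (-(β + 1)) * (β * |r - 1| * ratioSum r ^ ⌈β + 2⌉₊) +
          d ^ (-(β + 1)) * ((β + 1) * |r - 1| * ratioSum r ^ ⌈β + 2⌉₊)) := by gcongr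
    _ = A * β * (2 * β + 1) * d ^ (-(β + 1)) * |r - 1| * ratioSum r ^ ⌈β + 2⌉₊ := by ring

lemma exists_one_add_sq_peakIndex_sub_le (hβ : 0 ≤ β) (hA : 0 ≤ A) :
    ∃ C : ℝ, 0 < C ∧ ∃ M : ℕ, ∀ d ∈ Ioc (0 : ℝ) 1, ∀ δ : ℝ, 0 < δ →
      1 + (peakWidth β δ * (peakIndex β A d - peakIndex β A δ)) ^ 2 ≤
        C * peakDeviation β d δ ^ M := by
  set c := A * β * (2 * β + 1)
  set N := ⌈1 + β / 2⌉₊ + ⌈β + 2⌉₊ with hN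
  refine ⟨1 + c ^ 2, by positivity, 2 * N + 1, fun d hd δ hδ => ?_⟩
  have hwd := peakWidth_pos (β := β) hd.1
  have hwδ := peakWidth_pos (β := β) hδ
  have hQ := one_le_peakDeviation (β := β) hd.1 hδ
  have hRQ := ratioSum_le_peakDeviation (β := β) hd.1 hδ
  have hR := one_le_ratioSum (div_pos hδ hd.1)
  have hXQ := one_add_sq_le_peakDeviation (β := β) hd.1 hδ
  set Q := peakDeviation β d δ
  set X := (δ - d) / peakWidth β d with hX
  have habs : |peakWidth β δ * (peakIndex β A d - peakIndex β A δ)| ≤ c * Q ^ N * |X| := by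
    have hdist : |δ / d - 1| = |X| * peakWidth β d / d := by
      rw [hX, abs_div, abs_of_pos hwd, div_mul_cancel₀ _ hwd.ne', div_sub_one hd.1.ne', abs_div,
        abs_of_pos hd.1]
    have hcancel : peakWidth β d ^ 2 * d ^ (-(β + 1)) / d = 1 := by
      have := hd.1.ne'
      rw [rpow_neg_add_one hd.1, ← mul_div_assoc, sq_peakWidth_mul_rpow_neg hd.1]
      field_simp
    have hpow := Real.rpow_pos_of_pos hd.1 (-(β + 1))
    rw [abs_mul, abs_of_pos hwδ]
    calc peakWidth β δ * |peakIndex β A d - peakIndex β A δ|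
        ≤ Q ^ ⌈1 + β / 2⌉₊ * peakWidth β d *
            (c * d ^ (-(β + 1)) * (|X| * peakWidth β d / d) * Q ^ ⌈β + 2⌉₊) := by
          rw [← hdist]
          gcongr
          · exact peakWidth_right_le_peakDeviation_pow_mul hβ hd.1 hδ
          · exact (abs_peakIndex_sub_le hβ hA hd hδ).trans (by gcongr)
      _ = c * Q ^ N * |X| * (peakWidth β d ^ 2 * d ^ (-(β + 1)) / d) := by rw [hN, pow_add]; ring
      _ = c * Q ^ N * |X| := by rw [hcancel, mul_one]
  calc 1 + (peakWidth β δ * (peakIndex β A d - peakIndex β A δ)) ^ 2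
      ≤ 1 + (c * Q ^ N * |X|) ^ 2 := by rw [← sq_abs (_ * _)]; gcongr
    _ = 1 + c ^ 2 * (Q ^ (2 * N) * X ^ 2) := by rw [mul_pow, sq_abs]; ring
    _ ≤ Q ^ (2 * N + 1) + c ^ 2 * (Q ^ (2 * N) * Q) := by
        gcongr
        · exact one_le_pow₀ hQ
        · linarith
    _ = (1 + c ^ 2) * Q ^ (2 * N + 1) := by ring

end Peak

/-- The moments `∫₀¹ uⁿ W(u) du`. In terms of `u = |z|²` they are twice the odd moments of the
radial weight `W(|z|²)`, hence the reciprocals of the coefficients of its Bergman kernel. -/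
def powMoment (W : ℝ → ℝ) (n : ℕ) : ℝ := ∫ u in Ioo (0 : ℝ) 1, u ^ n * W u

/-- `W` is a weight on `(0, 1)` to which the moment estimates apply. -/
structure IsPosWeight (W : ℝ → ℝ) : Prop where
  integrableOn : IntegrableOn W (Ioo 0 1)
  pos : ∀ u ∈ Ioo (0 : ℝ) 1, 0 < W u

section Moments

variable {W : ℝ → ℝ}

lemma image_sq_Ioo : (fun s : ℝ => s ^ 2) '' Ioo 0 1 = Ioo 0 1 := by
  refine Subset.antisymm ?_ fun u hu => ?_
  · rintro _ ⟨s, hs, rfl⟩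
    exact ⟨pow_pos hs.1 2, pow_lt_one₀ hs.1.le hs.2 two_ne_zero⟩
  · exact ⟨√u, ⟨Real.sqrt_pos.mpr hu.1, (Real.sqrt_lt' one_pos).mpr (by simpa using hu.2)⟩,
      Real.sq_sqrt hu.1.le⟩

lemma injOn_sq_Ioo : InjOn (fun s : ℝ => s ^ 2) (Ioo 0 1) := fun _ hs _ ht h =>
  (pow_left_inj₀ hs.1.le ht.1.le two_ne_zero).mp h

lemma hasDerivWithinAt_sq (s : ℝ) (S : Set ℝ) :
    HasDerivWithinAt (fun s : ℝ => s ^ 2) (2 * s) S s := by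
  simpa using (hasDerivAt_pow 2 s).hasDerivWithinAt

lemma two_mul_mom_sq (W : ℝ → ℝ) (n : ℕ) :
    2 * mom (fun s => W (s ^ 2)) (2 * (n : ℝ) + 1) = powMoment W n := by
  rw [powMoment, ← image_sq_Ioo, integral_image_eq_integral_abs_deriv_smul measurableSet_Ioo
    (fun s _ => hasDerivWithinAt_sq s _) injOn_sq_Ioo, mom,
    intervalIntegral.integral_of_le zero_le_one, integral_Ioc_eq_integral_Ioo,
    ← integral_const_mul]
  refine setIntegral_congr_fun measurableSet_Ioo fun s hs => ?_
  have hpow : s ^ (2 * (n : ℝ) + 1) = s ^ (2 * n + 1) := by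
    rw [← Real.rpow_natCast]; push_cast; rfl
  simp only [hpow, abs_of_pos (mul_pos two_pos hs.1), smul_eq_mul]
  ring

lemma setIntegral_Ioo_pos {f : ℝ → ℝ} {a b : ℝ} (hab : a < b) (hf : IntegrableOn f (Ioo a b))
    (hpos : ∀ x ∈ Ioo a b, 0 < f x) : 0 < ∫ x in Ioo a b, f x := by
  rw [← integral_Ioc_eq_integral_Ioo, ← intervalIntegral.integral_of_le hab.le]
  exact intervalIntegral.intervalIntegral_pos_of_pos_on
    ((intervalIntegrable_iff_integrableOn_Ioo_of_le hab.le).mpr hf) hpos hab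

namespace IsPosWeight

lemma integrableOn_continuous_mul (hW : IsPosWeight W) {g : ℝ → ℝ} (hg : Continuous g) :
    IntegrableOn (fun u => g u * W u) (Ioo 0 1) := by
  have h := hW.integrableOn
  rw [← integrableOn_Icc_iff_integrableOn_Ioo] at h ⊢
  exact h.continuousOn_mul hg.continuousOn isCompact_Icc

lemma integrableOn_pow_mul (hW : IsPosWeight W) (n : ℕ) :
    IntegrableOn (fun u => u ^ n * W u) (Ioo 0 1) :=
  hW.integrableOn_continuous_mul (continuous_pow n)

lemma pow_mul_pos (hW : IsPosWeight W) (n : ℕ) {u : ℝ} (hu : u ∈ Ioo (0 : ℝ) 1) :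
    0 < u ^ n * W u :=
  mul_pos (pow_pos hu.1 n) (hW.pos u hu)

lemma setIntegral_Ioo_le_powMoment (hW : IsPosWeight W) (n : ℕ) {a b : ℝ} (ha : 0 ≤ a)
    (hb : b ≤ 1) : ∫ u in Ioo a b, u ^ n * W u ≤ powMoment W n :=
  setIntegral_mono_set (hW.integrableOn_pow_mul n)
    ((ae_restrict_iff' measurableSet_Ioo).mpr (.of_forall fun _ hu => (hW.pow_mul_pos n hu).le))
    (Ioo_subset_Ioo ha hb).eventuallyLE

lemma powMoment_pos (hW : IsPosWeight W) (n : ℕ) : 0 < powMoment W n :=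
  setIntegral_Ioo_pos one_pos (hW.integrableOn_pow_mul n) fun _ hu => hW.pow_mul_pos n hu

lemma integral_sub_mul_sq (hW : IsPosWeight W) (n : ℕ) (a b : ℝ) :
    ∫ u in Ioo (0 : ℝ) 1, (a - b * u) ^ 2 * (u ^ n * W u) =
      a ^ 2 * powMoment W n - 2 * a * b * powMoment W (n + 1) + b ^ 2 * powMoment W (n + 2) := by
  have h₀ := (hW.integrableOn_pow_mul n).const_mul (a ^ 2)
  have h₁ := (hW.integrableOn_pow_mul (n + 1)).const_mul (2 * a * b)
  have h₂ := (hW.integrableOn_pow_mul (n + 2)).const_mul (b ^ 2)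
  rw [powMoment, powMoment, powMoment, ← integral_const_mul, ← integral_const_mul,
    ← integral_const_mul, ← integral_sub' h₀ h₁, ← integral_add' (h₀.sub h₁) h₂]
  congr 1 with u
  simp only [Pi.add_apply, Pi.sub_apply]
  ring

lemma sq_powMoment_succ_le (hW : IsPosWeight W) (n : ℕ) :
    powMoment W (n + 1) ^ 2 ≤ powMoment W n * powMoment W (n + 2) := by
  have hquad := hW.integral_sub_mul_sq n (powMoment W (n + 2)) (powMoment W (n + 1))
  have hnonneg : 0 ≤ ∫ u in Ioo (0 : ℝ) 1,
      (powMoment W (n + 2) - powMoment W (n + 1) * u) ^ 2 * (u ^ n * W u) :=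
    setIntegral_nonneg measurableSet_Ioo fun u hu =>
      mul_nonneg (sq_nonneg _) (hW.pow_mul_pos n hu).le
  refine le_of_mul_le_mul_left ?_ (hW.powMoment_pos (n + 2))
  linarith

lemma powMoment_le_mul_powMoment_succ (hW : IsPosWeight W) (n : ℕ) :
    powMoment W n ≤ powMoment W 0 / powMoment W 1 * powMoment W (n + 1) := by
  induction n with
  | zero => rw [zero_add, div_mul_cancel₀ _ (hW.powMoment_pos 1).ne']
  | succ n ih =>
    refine le_of_mul_le_mul_left ?_ (hW.powMoment_pos n)
    have := hW.powMoment_pos (n + 1)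
    calc powMoment W n * powMoment W (n + 1)
        ≤ powMoment W 0 / powMoment W 1 * powMoment W (n + 1) * powMoment W (n + 1) := by gcongr
      _ = powMoment W 0 / powMoment W 1 * powMoment W (n + 1) ^ 2 := by ring
      _ ≤ powMoment W 0 / powMoment W 1 * (powMoment W n * powMoment W (n + 2)) :=
          mul_le_mul_of_nonneg_left (hW.sq_powMoment_succ_le n)
            (div_pos (hW.powMoment_pos 0) (hW.powMoment_pos 1)).le
      _ = powMoment W n * (powMoment W 0 / powMoment W 1 * powMoment W (n + 1 + 1)) := by ring

lemma exists_mul_pow_le_powMoment (hW : IsPosWeight W) {s : ℝ} (hs : s ∈ Ioo (0 : ℝ) 1) :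
    ∃ c : ℝ, 0 < c ∧ ∀ n, c * s ^ n ≤ powMoment W n := by
  have hsub : Ioo s 1 ⊆ Ioo 0 1 := Ioo_subset_Ioo_left hs.1.le
  have hint := hW.integrableOn.mono_set hsub
  refine ⟨∫ u in Ioo s 1, W u,
    setIntegral_Ioo_pos hs.2 hint fun u hu => hW.pos u (hsub hu), fun n => ?_⟩
  calc (∫ u in Ioo s 1, W u) * s ^ n = ∫ u in Ioo s 1, s ^ n * W u := by
        rw [integral_const_mul, mul_comm]
    _ ≤ ∫ u in Ioo s 1, u ^ n * W u :=
        setIntegral_mono_on (hint.const_mul _) ((hW.integrableOn_pow_mul n).mono_set hsub)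
          measurableSet_Ioo fun u hu => mul_le_mul_of_nonneg_right
            (pow_le_pow_left₀ hs.1.le hu.1.le n) (hW.pos u (hsub hu)).le
    _ ≤ powMoment W n := hW.setIntegral_Ioo_le_powMoment n hs.1.le le_rfl

lemma summable_pow_div_powMoment (hW : IsPosWeight W) {ρ : ℝ} (hρ : ρ ∈ Ico (0 : ℝ) 1) :
    Summable fun n => ρ ^ n / powMoment W n := by
  obtain ⟨s, hρs, hs1⟩ := exists_between hρ.2
  have hs : 0 < s := hρ.1.trans_lt hρs
  obtain ⟨c, hc, hle⟩ := hW.exists_mul_pow_le_powMoment ⟨hs, hs1⟩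
  refine .of_nonneg_of_le (fun n => div_nonneg (pow_nonneg hρ.1 n) (hW.powMoment_pos n).le)
    (fun n => ?_) ((summable_geometric_of_lt_one (div_nonneg hρ.1 hs.le)
      ((div_lt_one hs).mpr hρs)).mul_left c⁻¹)
  calc ρ ^ n / powMoment W n ≤ ρ ^ n / (c * s ^ n) :=
        div_le_div_of_nonneg_left (pow_nonneg hρ.1 n) (by positivity) (hle n)
    _ = c⁻¹ * (ρ / s) ^ n := by rw [div_pow]; field_simp

lemma sq_coeff_sub_le (hW : IsPosWeight W) (ρ : ℝ) (n : ℕ) :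
    (ρ ^ (n + 1) / powMoment W (n + 1) - ρ ^ n / powMoment W n) ^ 2 ≤
      (powMoment W 0 / powMoment W 1) ^ 2 * (ρ ^ n / powMoment W n) ^ 2 *
        ((∫ u in Ioo (0 : ℝ) 1, (ρ - u) ^ 2 * (u ^ n * W u)) / powMoment W n) := by
  have hquad := hW.integral_sub_mul_sq n ρ 1
  simp only [one_mul, mul_one, one_pow] at hquad
  rw [hquad]
  have hratio := hW.powMoment_le_mul_powMoment_succ n
  have hconvex := hW.sq_powMoment_succ_le n
  have h₀ := hW.powMoment_pos n
  have h₁ := hW.powMoment_pos (n + 1)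
  set a := powMoment W n
  set b := powMoment W (n + 1)
  set K := powMoment W 0 / powMoment W 1
  set v := ρ ^ 2 * a - 2 * ρ * b + powMoment W (n + 2)
  have hcs : (ρ * a - b) ^ 2 ≤ a * v := by linear_combination hconvex
  have hv : 0 ≤ v := nonneg_of_mul_nonneg_right ((sq_nonneg _).trans hcs) h₀
  have hone : 1 ≤ K * b / a := (one_le_div h₀).mpr hratio
  calc (ρ ^ (n + 1) / b - ρ ^ n / a) ^ 2 = (ρ ^ n / a) ^ 2 * ((ρ * a - b) ^ 2 / b ^ 2) := by
        field_simp; ring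
    _ ≤ (ρ ^ n / a) ^ 2 * (a * v / b ^ 2 * (K * b / a) ^ 2) := by
        gcongr
        exact (div_le_div_of_nonneg_right hcs (sq_nonneg b)).trans
          (le_mul_of_one_le_right (by positivity) (one_le_pow₀ hone))
    _ = K ^ 2 * (ρ ^ n / a) ^ 2 * (v / a) := by field_simp

end IsPosWeight

end Moments

section Localisation

variable {β A s d δ : ℝ} {n : ℕ}

lemma isPosWeight_expWeight (s : ℝ) (hβ : 0 < β) (hA : 0 < A) :
    IsPosWeight (expWeight β A s) where
  integrableOn := by
    obtain ⟨C, -, hC⟩ := exists_expWeight_le s hβ hA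
    refine Measure.integrableOn_of_bounded (M := C) (by simp)
      measurable_expWeight.aestronglyMeasurable
      ((ae_restrict_iff' measurableSet_Ioo).mpr (.of_forall fun u hu => ?_))
    rw [Real.norm_of_nonneg (expWeight_pos hu.2).le]
    exact hC u ⟨hu.1.le, hu.2⟩
  pos _ hu := expWeight_pos hu.2

lemma expWeight_one_sub_eq (hd : 0 < d) (hδ : 0 < δ) :
    expWeight β A s (1 - δ) = expWeight β A s (1 - d) * (δ / d) ^ s *
      Real.exp (-(A * (d ^ (-β) * bernoulliDefect β (δ / d)))) *
      Real.exp (A * β * d ^ (-(β + 1)) * (δ - d)) := by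
  have hexp : -(A * δ ^ (-β)) = -(A * d ^ (-β)) +
      -(A * (d ^ (-β) * bernoulliDefect β (δ / d))) + A * β * d ^ (-(β + 1)) * (δ - d) := by
    have := Real.rpow_pos_of_pos hd (-β)
    rw [bernoulliDefect, Real.div_rpow hδ.le hd.le, rpow_neg_add_one hd]
    field_simp
    ring
  rw [expWeight_eq_rpow_neg (by linarith), expWeight_eq_rpow_neg (by linarith), sub_sub_cancel,
    sub_sub_cancel, hexp, Real.exp_add, Real.exp_add, Real.div_rpow hδ.le hd.le]
  field_simp

lemma pow_le_pow_mul_exp {p u κ : ℝ} (hp : 0 ≤ p) (hu : 0 ≤ u) (hκ : 0 ≤ κ)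
    (hn : (n : ℝ) = κ * p) :
    u ^ n ≤ p ^ n * Real.exp (κ * (u - p)) := by
  rcases hp.eq_or_lt with rfl | hp
  · obtain rfl : n = 0 := by simpa using hn
    simpa using mul_nonneg hκ hu
  · have hbase : u ≤ p * Real.exp ((u - p) / p) := by
      have := Real.add_one_le_exp ((u - p) / p)
      rwa [div_add_one hp.ne', sub_add_cancel, div_le_iff₀' hp] at this
    calc u ^ n ≤ (p * Real.exp ((u - p) / p)) ^ n := pow_le_pow_left₀ hu hbase n
      _ = p ^ n * Real.exp (κ * (u - p)) := by
          rw [mul_pow, ← Real.exp_nat_mul, hn]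
          congr 2
          field_simp

lemma pow_mul_exp_le_exp_mul_pow {p u κ : ℝ} (hp : 0 ≤ p) (hu : 0 < u) (hn : (n : ℝ) = κ * p) :
    p ^ n * Real.exp (κ * (u - p)) ≤ Real.exp (κ * ((u - p) ^ 2 / u)) * u ^ n := by
  have hbase : p ≤ u * Real.exp ((p - u) / u) := by
    have := Real.add_one_le_exp ((p - u) / u)
    rwa [div_add_one hu.ne', sub_add_cancel, div_le_iff₀' hu] at this
  calc p ^ n * Real.exp (κ * (u - p))
      ≤ (u * Real.exp ((p - u) / u)) ^ n * Real.exp (κ * (u - p)) := by gcongr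
    _ = u ^ n * Real.exp (κ * p * ((p - u) / u) + κ * (u - p)) := by
        rw [mul_pow, ← Real.exp_nat_mul, hn, Real.exp_add, mul_assoc]
    _ = Real.exp (κ * ((u - p) ^ 2 / u)) * u ^ n := by
        rw [mul_comm]
        congr 2
        field_simp
        ring

lemma pow_mul_expWeight_le (hβ : 0 ≤ β) (hA : 0 ≤ A) (hn : IsPeak β A n d)
    (hδ : δ ∈ Ioc (0 : ℝ) 1) :
    (1 - δ) ^ n * expWeight β A s (1 - δ) ≤ (1 - d) ^ n * expWeight β A s (1 - d) *
      ((δ / d) ^ s * Real.exp (-(A * (d ^ (-β) * bernoulliDefect β (δ / d))))) := by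
  obtain ⟨hd, hn⟩ := hn
  have hd₀ := hd.1
  have hδ₀ := hδ.1
  have hW := expWeight_pos (β := β) (A := A) (s := s) (u := 1 - δ) (by linarith)
  have hpow : (1 - δ) ^ n ≤ (1 - d) ^ n * Real.exp (A * β * d ^ (-(β + 1)) * (1 - δ - (1 - d))) :=
    pow_le_pow_mul_exp (sub_nonneg.mpr hd.2) (sub_nonneg.mpr hδ.2) (by positivity)
      (by rw [← hn, peakIndex]; ring)
  have hcancel : A * β * d ^ (-(β + 1)) * (1 - δ - (1 - d)) =
      -(A * β * d ^ (-(β + 1)) * (δ - d)) := by ring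
  rw [hcancel, Real.exp_neg] at hpow
  refine (mul_le_mul_of_nonneg_right hpow hW.le).trans_eq ?_
  rw [expWeight_one_sub_eq hd₀ hδ₀]
  field_simp

lemma rpow_neg_mul_sq_le (hd : 0 < d) (hδ : δ ∈ Icc (d - peakWidth β d / 2) d) :
    d ^ (-β) * (d - δ) ^ 2 ≤ d ^ 2 / 4 := by
  have h : d - δ ≤ peakWidth β d / 2 := by linarith [hδ.1]
  calc d ^ (-β) * (d - δ) ^ 2 ≤ d ^ (-β) * (peakWidth β d / 2) ^ 2 := by
        gcongr
        linarith [hδ.2]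
    _ = d ^ 2 / 4 := by rw [← sq_peakWidth_mul_rpow_neg (β := β) hd]; ring

lemma rpow_neg_mul_bernoulliDefect_le (hβ : 0 ≤ β) (hd : d ∈ Ioc (0 : ℝ) 1)
    (hδ : δ ∈ Icc (d - peakWidth β d / 2) d) :
    d ^ (-β) * bernoulliDefect β (δ / d) ≤ β * (β + 1) * 2 ^ (β + 2) := by
  have hd₀ := hd.1
  have hhalf : 1 / 2 ≤ δ / d := by
    rw [le_div_iff₀ hd₀]
    linarith [hδ.1, peakWidth_le_self hβ hd]
  have hr : δ / d ≤ 1 := (div_le_one hd₀).mpr hδ.2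
  have hr₀ : 0 < δ / d := by linarith
  have hrpow : (δ / d) ^ (-(β + 2)) ≤ 2 ^ (β + 2) := by
    rw [Real.rpow_neg hr₀.le, ← Real.inv_rpow hr₀.le]
    exact Real.rpow_le_rpow (by positivity) (inv_le_of_inv_le₀ two_pos (by rwa [← one_div]))
      (by positivity)
  have hsq : d ^ (-β) * (1 - δ / d) ^ 2 ≤ 1 := by
    rw [one_sub_div hd₀.ne', div_pow, ← mul_div_assoc, div_le_one (by positivity)]
    linarith [rpow_neg_mul_sq_le hd₀ hδ, sq_nonneg d]
  calc d ^ (-β) * bernoulliDefect β (δ / d)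
      ≤ d ^ (-β) * (β * (β + 1) * (δ / d) ^ (-(β + 2)) * (1 - δ / d) ^ 2) := by
        gcongr
        exact bernoulliDefect_le_sq hβ hr₀ hr
    _ = β * (β + 1) * (δ / d) ^ (-(β + 2)) * (d ^ (-β) * (1 - δ / d) ^ 2) := by ring
    _ ≤ β * (β + 1) * 2 ^ (β + 2) * 1 := by gcongr
    _ = β * (β + 1) * 2 ^ (β + 2) := mul_one _

lemma rpow_neg_mul_sq_div_le (hβ : 0 ≤ β) (hd : d ∈ Ioc (0 : ℝ) 1)
    (hδ : δ ∈ Ico (d - peakWidth β d / 2) d) :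
    d ^ (-(β + 1)) * ((d - δ) ^ 2 / (1 - δ)) ≤ 2 ^ β := by
  have hd₀ := hd.1
  have hu : 0 < 1 - δ := by linarith [hδ.2, hd.2]
  have hsq := rpow_neg_mul_sq_le hd₀ (Ico_subset_Icc_self hδ)
  rw [rpow_neg_add_one hd₀, div_mul_div_comm, div_le_iff₀ (by positivity)]
  rcases le_total (1 / 2) (1 - δ) with h | h
  · have : (1 : ℝ) ≤ 2 ^ β := Real.one_le_rpow one_le_two hβ
    nlinarith [hd.2, mul_pos hd₀ hu, sq_nonneg d]
  · have hhalf : 1 / 2 ≤ d := by linarith [hδ.2]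
    have hrpow : d ^ (-β) ≤ 2 ^ β := by
      rw [Real.rpow_neg hd₀.le, ← Real.inv_rpow hd₀.le]
      exact Real.rpow_le_rpow (by positivity) (inv_le_of_inv_le₀ two_pos (by rwa [← one_div])) hβ
    have hsub : (d - δ) ^ 2 ≤ d * (1 - δ) := by
      rw [sq]
      exact mul_le_mul (by linarith) (by linarith [hd.2]) (by linarith [hδ.2]) hd₀.le
    exact mul_le_mul hrpow hsub (sq_nonneg _) (by positivity)

lemma one_le_three_pow_mul_rpow_div (s : ℝ) (hd : 0 < d) (hδ : δ ∈ Icc (d / 2) d) :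
    1 ≤ 3 ^ ⌈|s|⌉₊ * (δ / d) ^ s := by
  have hδ₀ : 0 < δ := (half_pos hd).trans_le hδ.1
  have hr := div_pos hδ₀ hd
  have hR : ratioSum (δ / d) ≤ 3 := by
    have h₁ : δ / d ≤ 1 := (div_le_one hd).mpr hδ.2
    have h₂ : (δ / d)⁻¹ ≤ 2 := by
      rw [inv_div, div_le_iff₀ hδ₀]
      linarith [hδ.1]
    rw [ratioSum]
    linarith
  have hrpow : (δ / d) ^ (-s) ≤ 3 ^ ⌈|s|⌉₊ :=
    (rpow_le_ratioSum_pow hr ((abs_neg s).trans_le (Nat.le_ceil _))).trans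
      (pow_le_pow_left₀ (zero_le_one.trans (one_le_ratioSum hr)) hR _)
  rwa [Real.rpow_neg hr.le, inv_le_iff_one_le_mul₀ (Real.rpow_pos_of_pos hr s)] at hrpow

lemma pow_le_exp_mul_pow_mul_exp (hβ : 0 ≤ β) (hA : 0 ≤ A) (hn : IsPeak β A n d)
    (hδ : δ ∈ Ico (d - peakWidth β d / 2) d) :
    (1 - d) ^ n ≤ Real.exp (A * β * 2 ^ β) * (1 - δ) ^ n *
      Real.exp (A * β * d ^ (-(β + 1)) * (δ - d)) := by
  obtain ⟨hd, hn⟩ := hn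
  have hu : 0 < 1 - δ := by linarith [hδ.2, hd.2]
  have h := pow_mul_exp_le_exp_mul_pow (κ := A * β * d ^ (-(β + 1))) (sub_nonneg.mpr hd.2) hu
    (by rw [← hn, peakIndex]; ring)
  have hneg : A * β * d ^ (-(β + 1)) * (1 - δ - (1 - d)) =
    -(A * β * d ^ (-(β + 1)) * (δ - d)) := by ring
  rw [hneg, Real.exp_neg, mul_inv_le_iff₀ (Real.exp_pos _)] at h
  refine h.trans ?_
  rw [show 1 - δ - (1 - d) = d - δ by ring, mul_assoc (A * β)]
  gcongr
  exact rpow_neg_mul_sq_div_le hβ hd hδ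

lemma exists_peak_value_le (s : ℝ) (hβ : 0 ≤ β) (hA : 0 ≤ A) :
    ∃ C : ℝ, 0 < C ∧ ∀ (n : ℕ) (d : ℝ), IsPeak β A n d → ∀ δ ∈ Ico (d - peakWidth β d / 2) d,
      (1 - d) ^ n * expWeight β A s (1 - d) ≤ C * ((1 - δ) ^ n * expWeight β A s (1 - δ)) := by
  set E := A * (β * (β + 1) * 2 ^ (β + 2)) + A * β * 2 ^ β
  refine ⟨3 ^ ⌈|s|⌉₊ * Real.exp E, by positivity, fun n d ⟨hd, hn⟩ δ hδ => ?_⟩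
  have hd₀ := hd.1
  have hhalf : d / 2 ≤ δ := by linarith [hδ.1, peakWidth_le_self hβ hd]
  have hδ₀ : 0 < δ := by linarith
  have hu : 0 < 1 - δ := by linarith [hδ.2, hd.2]
  have hratio := one_le_three_pow_mul_rpow_div s hd₀ ⟨hhalf, hδ.2.le⟩
  have hpow := pow_le_exp_mul_pow_mul_exp hβ hA ⟨hd, hn⟩ hδ
  have hdefect : 1 ≤ Real.exp (A * (β * (β + 1) * 2 ^ (β + 2))) *
      Real.exp (-(A * (d ^ (-β) * bernoulliDefect β (δ / d)))) := by
    rw [← Real.exp_add, Real.one_le_exp_iff]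
    nlinarith [rpow_neg_mul_bernoulliDefect_le hβ hd (Ico_subset_Icc_self hδ)]
  have hW := expWeight_pos (β := β) (A := A) (s := s) (u := 1 - d) (by linarith)
  calc (1 - d) ^ n * expWeight β A s (1 - d)
      ≤ Real.exp (A * β * 2 ^ β) * (1 - δ) ^ n * Real.exp (A * β * d ^ (-(β + 1)) * (δ - d)) *
          (expWeight β A s (1 - d) * (3 ^ ⌈|s|⌉₊ * (δ / d) ^ s) *
          (Real.exp (A * (β * (β + 1) * 2 ^ (β + 2))) *
            Real.exp (-(A * (d ^ (-β) * bernoulliDefect β (δ / d)))))) := by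
        gcongr
        rw [mul_assoc]
        exact le_mul_of_one_le_right hW.le (one_le_mul_of_one_le_of_one_le hratio hdefect)
    _ = 3 ^ ⌈|s|⌉₊ * Real.exp E * ((1 - δ) ^ n * expWeight β A s (1 - δ)) := by
        rw [expWeight_one_sub_eq hd₀ hδ₀, Real.exp_add]
        ring

lemma exists_peak_value_mul_width_le (s : ℝ) (hβ : 0 < β) (hA : 0 < A) :
    ∃ C : ℝ, 0 < C ∧ ∀ (n : ℕ) (d : ℝ), IsPeak β A n d →
      (1 - d) ^ n * expWeight β A s (1 - d) * peakWidth β d ≤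
        C * powMoment (expWeight β A s) n := by
  obtain ⟨C, hC, hle⟩ := exists_peak_value_le s hβ.le hA.le
  refine ⟨2 * C, by positivity, fun n d hn => ?_⟩
  have hwd := peakWidth_pos (β := β) hn.1.1
  have hwle := peakWidth_le_self hβ.le hn.1
  have hW := isPosWeight_expWeight s hβ hA
  have ha : 0 ≤ 1 - d := sub_nonneg.mpr hn.1.2
  have hb : 1 - d + peakWidth β d / 2 ≤ 1 := by linarith
  have hconst : ∫ _ in Ioo (1 - d) (1 - d + peakWidth β d / 2),
      (1 - d) ^ n * expWeight β A s (1 - d) ≤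
      ∫ u in Ioo (1 - d) (1 - d + peakWidth β d / 2), C * (u ^ n * expWeight β A s u) := by
    refine setIntegral_mono_on (integrableOn_const (by simp))
      (((hW.integrableOn_pow_mul n).mono_set (Ioo_subset_Ioo ha hb)).const_mul C)
      measurableSet_Ioo fun u hu => ?_
    simpa only [sub_sub_cancel] using
      hle n d hn (1 - u) ⟨by linarith [hu.2], by linarith [hu.1]⟩
  rw [setIntegral_const, integral_const_mul, Real.volume_real_Ioo_of_le (by linarith),
    add_sub_cancel_left, smul_eq_mul] at hconst
  have := mul_le_mul_of_nonneg_left (hW.setIntegral_Ioo_le_powMoment n ha hb) hC.le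
  linarith

end Localisation

/-- The Cauchy kernel of total mass `π`; unlike `ProbabilityTheory.cauchyPDFReal` it is indexed by
its height `t` at the origin, the inverse of its width. -/
def cauchyKernel (t x : ℝ) : ℝ := t / (1 + (t * x) ^ 2)

section CauchyKernel

variable {t : ℝ}

lemma cauchyKernel_nonneg (ht : 0 ≤ t) (x : ℝ) : 0 ≤ cauchyKernel t x := by
  unfold cauchyKernel; positivity

lemma cauchyKernel_eq (t : ℝ) : cauchyKernel t = fun x => t * (1 + (t * x) ^ 2)⁻¹ :=
  funext fun _ => div_eq_mul_inv _ _

lemma integrable_cauchyKernel_sub (ht : 0 < t) (a : ℝ) :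
    Integrable fun x => cauchyKernel t (x - a) := by
  refine Integrable.comp_sub_right ?_ a
  rw [cauchyKernel_eq]
  exact (integrable_inv_one_add_sq.comp_mul_left' ht.ne').const_mul t

lemma integral_cauchyKernel_sub (ht : 0 < t) (a : ℝ) :
    ∫ x, cauchyKernel t (x - a) = Real.pi := by
  rw [integral_sub_right_eq_self, cauchyKernel_eq, integral_const_mul,
    Measure.integral_comp_mul_left (fun x => (1 + x ^ 2)⁻¹) t, integral_univ_inv_one_add_sq,
    abs_of_pos (inv_pos.mpr ht), smul_eq_mul, mul_inv_cancel_left₀ ht.ne']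

lemma setIntegral_cauchyKernel_sub_le (ht : 0 < t) (a : ℝ) (s : Set ℝ) :
    ∫ x in s, cauchyKernel t (x - a) ≤ Real.pi :=
  (setIntegral_le_integral (integrable_cauchyKernel_sub ht a)
    (.of_forall fun _ => cauchyKernel_nonneg ht.le _)).trans_eq (integral_cauchyKernel_sub ht a)

lemma lintegral_cauchyKernel_sub (ht : 0 < t) (a : ℝ) :
    ∫⁻ x, ENNReal.ofReal (cauchyKernel t (x - a)) = ENNReal.ofReal Real.pi := by
  rw [← integral_cauchyKernel_sub ht a, ofReal_integral_eq_lintegral_ofReal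
    (integrable_cauchyKernel_sub ht a) (.of_forall fun _ => cauchyKernel_nonneg ht.le _)]

lemma cauchyKernel_le_three_mul {x y : ℝ} (ht : t ∈ Icc (0 : ℝ) 1) (hxy : |y - x| ≤ 1) :
    cauchyKernel t x ≤ 3 * cauchyKernel t y := by
  have ht₀ := ht.1
  have hsmall : (t * (y - x)) ^ 2 ≤ 1 := by
    rw [sq_le_one_iff_abs_le_one, abs_mul, abs_of_nonneg ht.1]
    exact mul_le_one₀ ht.2 (abs_nonneg _) hxy
  rw [cauchyKernel, cauchyKernel, ← mul_div_assoc, div_le_div_iff₀ (by positivity) (by positivity)]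
  nlinarith [mul_nonneg ht.1 (sq_nonneg (t * x - t * (y - x))), mul_nonneg ht.1 (sq_nonneg (t * x))]

lemma tsum_cauchyKernel_natCast_sub_le (ht : t ∈ Ioc (0 : ℝ) 1) (a : ℝ) :
    ∑' n : ℕ, ENNReal.ofReal (cauchyKernel t (n - a)) ≤ ENNReal.ofReal (3 * Real.pi) := by
  have hcell : ∀ n : ℕ, ENNReal.ofReal (cauchyKernel t (n - a)) ≤
      ∫⁻ x in Ioc (n : ℝ) (n + 1), ENNReal.ofReal (3 * cauchyKernel t (x - a)) := fun n => by
    calc ENNReal.ofReal (cauchyKernel t (n - a))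
        = ∫⁻ _ in Ioc (n : ℝ) (n + 1), ENNReal.ofReal (cauchyKernel t (n - a)) := by
          simp
      _ ≤ ∫⁻ x in Ioc (n : ℝ) (n + 1), ENNReal.ofReal (3 * cauchyKernel t (x - a)) :=
          setLIntegral_mono' measurableSet_Ioc fun x hx =>
            ENNReal.ofReal_le_ofReal (cauchyKernel_le_three_mul (Ioc_subset_Icc_self ht) (by
              rw [sub_sub_sub_cancel_right, abs_le]
              constructor <;> linarith [hx.1, hx.2]))
  have hdisj : Pairwise (Function.onFun Disjoint fun n : ℕ => Ioc (n : ℝ) (n + 1)) := by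
    simpa using (Nat.mono_cast (α := ℝ)).pairwise_disjoint_on_Ioc_succ
  calc ∑' n : ℕ, ENNReal.ofReal (cauchyKernel t (n - a))
      ≤ ∑' n : ℕ, ∫⁻ x in Ioc (n : ℝ) (n + 1), ENNReal.ofReal (3 * cauchyKernel t (x - a)) :=
        ENNReal.tsum_le_tsum hcell
    _ = ∫⁻ x in ⋃ n : ℕ, Ioc (n : ℝ) (n + 1), ENNReal.ofReal (3 * cauchyKernel t (x - a)) :=
        (lintegral_iUnion (fun _ => measurableSet_Ioc) hdisj _).symm
    _ ≤ ∫⁻ x, ENNReal.ofReal (3 * cauchyKernel t (x - a)) := setLIntegral_le_lintegral _ _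
    _ = ENNReal.ofReal (3 * Real.pi) := by
        simp only [ENNReal.ofReal_mul zero_le_three]
        rw [lintegral_const_mul' _ _ ENNReal.ofReal_ne_top, lintegral_cauchyKernel_sub ht.1]

end CauchyKernel

section Concentration

variable {β A : ℝ}

lemma exists_peakDeviation_pow_mul_le (s : ℝ) (hβ : 0 < β) (hA : 0 < A) (M : ℕ) :
    ∃ C : ℝ, 0 < C ∧ ∀ (n : ℕ) (d : ℝ), IsPeak β A n d → ∀ u ∈ Ico (0 : ℝ) 1,
      peakDeviation β d (1 - u) ^ M * (u ^ n * expWeight β A s u) ≤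
        C * powMoment (expWeight β A s) n * cauchyKernel (peakWidth β d)⁻¹ (u - (1 - d)) := by
  obtain ⟨C₁, hC₁, hpeak⟩ := exists_peak_value_mul_width_le s hβ hA
  obtain ⟨C₂, hC₂, hexp⟩ := exists_peakDeviation_pow_mul_exp_le hβ hA (M + 1 + ⌈|s|⌉₊)
  refine ⟨C₂ * C₁, by positivity, fun n d hn u hu => ?_⟩
  have hδ : 0 < 1 - u := sub_pos.mpr hu.2
  have hd := hn.1.1
  have hwd := peakWidth_pos (β := β) hd
  have hQ := one_le_peakDeviation (β := β) hd hδ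
  have hup := pow_mul_expWeight_le (s := s) hβ.le hA.le hn ⟨hδ, sub_le_self 1 hu.1⟩
  rw [sub_sub_cancel] at hup
  have hX := one_add_sq_le_peakDeviation (β := β) hd hδ
  have hcauchy : cauchyKernel (peakWidth β d)⁻¹ (u - (1 - d)) =
      (peakWidth β d)⁻¹ / (1 + ((1 - u - d) / peakWidth β d) ^ 2) := by
    rw [cauchyKernel, inv_mul_eq_div, ← neg_sq, ← neg_div, neg_sub, sub_right_comm]
  have hZ : 0 ≤ (1 - d) ^ n * expWeight β A s (1 - d) :=
    mul_nonneg (pow_nonneg (sub_nonneg.mpr hn.1.2) n) (expWeight_pos (by linarith)).le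
  have hexp := hexp d hn.1 _ hδ
  have hpeak := hpeak n d hn
  have hrpow := rpow_div_le_peakDeviation_pow (β := β) hd hδ (Nat.le_ceil |s|)
  set Q := peakDeviation β d (1 - u)
  set Z := (1 - d) ^ n * expWeight β A s (1 - d)
  set e := Real.exp (-(A * (d ^ (-β) * bernoulliDefect β ((1 - u) / d))))
  rw [hcauchy, ← mul_div_assoc, le_div_iff₀ (by positivity)]
  calc Q ^ M * (u ^ n * expWeight β A s u) * (1 + ((1 - u - d) / peakWidth β d) ^ 2)
      ≤ Q ^ M * (Z * (Q ^ ⌈|s|⌉₊ * e)) * Q := by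
        refine mul_le_mul ?_ hX (by positivity) (by positivity)
        exact mul_le_mul_of_nonneg_left (hup.trans (by gcongr)) (by positivity)
    _ = Z * (Q ^ (M + 1 + ⌈|s|⌉₊) * e) := by ring
    _ ≤ C₁ * powMoment (expWeight β A s) n / peakWidth β d * C₂ :=
        mul_le_mul ((le_div_iff₀ hwd).mpr hpeak) hexp (by positivity)
          (hZ.trans ((le_div_iff₀ hwd).mpr hpeak))
    _ = C₂ * C₁ * powMoment (expWeight β A s) n * (peakWidth β d)⁻¹ := by
        rw [div_eq_mul_inv]; ring

lemma exists_lintegral_peakDeviation_pow_mul_le (s : ℝ) (hβ : 0 < β) (hA : 0 < A) (M : ℕ) :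
    ∃ C : ℝ, 0 < C ∧ ∀ (n : ℕ) (d : ℝ), IsPeak β A n d →
      ∫⁻ u in Ioo (0 : ℝ) 1,
          ENNReal.ofReal (peakDeviation β d (1 - u) ^ M * (u ^ n * expWeight β A s u)) ≤
        ENNReal.ofReal (C * powMoment (expWeight β A s) n) := by
  obtain ⟨C, hC, hle⟩ := exists_peakDeviation_pow_mul_le s hβ hA M
  refine ⟨C * Real.pi, mul_pos hC Real.pi_pos, fun n d hn => ?_⟩
  have hm := (isPosWeight_expWeight s hβ hA).powMoment_pos n
  calc ∫⁻ u in Ioo (0 : ℝ) 1,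
        ENNReal.ofReal (peakDeviation β d (1 - u) ^ M * (u ^ n * expWeight β A s u))
      ≤ ∫⁻ u in Ioo (0 : ℝ) 1, ENNReal.ofReal (C * powMoment (expWeight β A s) n) *
          ENNReal.ofReal (cauchyKernel (peakWidth β d)⁻¹ (u - (1 - d))) :=
        setLIntegral_mono' measurableSet_Ioo fun u hu => by
          rw [← ENNReal.ofReal_mul (by positivity)]
          exact ENNReal.ofReal_le_ofReal (hle n d hn u (Ioo_subset_Ico_self hu))
    _ ≤ ENNReal.ofReal (C * powMoment (expWeight β A s) n) * ENNReal.ofReal Real.pi := by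
        rw [lintegral_const_mul' _ _ ENNReal.ofReal_ne_top,
          ← lintegral_cauchyKernel_sub (inv_pos.mpr (peakWidth_pos hn.1.1)) (1 - d)]
        gcongr
        exact Measure.restrict_le_self
    _ = ENNReal.ofReal (C * Real.pi * powMoment (expWeight β A s) n) := by
        rw [← ENNReal.ofReal_mul (by positivity), mul_right_comm]

lemma exists_integral_sub_sq_mul_le (s : ℝ) (hβ : 0 < β) (hA : 0 < A) :
    ∃ C : ℝ, 0 < C ∧ ∀ (n : ℕ) (d : ℝ), IsPeak β A n d → ∀ ρ : ℝ,
      ∫ u in Ioo (0 : ℝ) 1, (ρ - u) ^ 2 * (u ^ n * expWeight β A s u) ≤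
        C * powMoment (expWeight β A s) n * (peakWidth β d ^ 2 + (ρ - (1 - d)) ^ 2) := by
  obtain ⟨C, hC, hle⟩ := exists_peakDeviation_pow_mul_le s hβ hA 1
  refine ⟨2 + 2 * C * Real.pi, by positivity, fun n d hn ρ => ?_⟩
  have hW := isPosWeight_expWeight s hβ hA
  have hm := hW.powMoment_pos n
  have hwd := peakWidth_pos (β := β) hn.1.1
  set w := peakWidth β d
  set m := powMoment (expWeight β A s) n
  have hpoint : ∀ u ∈ Ioo (0 : ℝ) 1, (ρ - u) ^ 2 * (u ^ n * expWeight β A s u) ≤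
      2 * (ρ - (1 - d)) ^ 2 * (u ^ n * expWeight β A s u) +
        2 * w ^ 2 * (C * m) * cauchyKernel w⁻¹ (u - (1 - d)) := fun u hu => by
    have hX : (1 - u - d) ^ 2 ≤ w ^ 2 * peakDeviation β d (1 - u) :=
      sq_sub_le_sq_peakWidth_mul_peakDeviation hn.1.1 (sub_pos.mpr hu.2)
    have hsq : (ρ - u) ^ 2 ≤ 2 * (ρ - (1 - d)) ^ 2 + 2 * (w ^ 2 * peakDeviation β d (1 - u)) := by
      linarith [sq_nonneg (ρ - (1 - d) + (u - (1 - d)))]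
    have hloc := hle n d hn u (Ioo_subset_Ico_self hu)
    rw [pow_one] at hloc
    nlinarith [mul_le_mul_of_nonneg_right hsq (hW.pow_mul_pos n hu).le,
      mul_le_mul_of_nonneg_left hloc (sq_nonneg w)]
  have hint₁ := (hW.integrableOn_pow_mul n).const_mul (2 * (ρ - (1 - d)) ^ 2)
  have hint₂ := ((integrable_cauchyKernel_sub (inv_pos.mpr hwd) (1 - d)).integrableOn
    (s := Ioo 0 1)).const_mul (2 * w ^ 2 * (C * m))
  calc ∫ u in Ioo (0 : ℝ) 1, (ρ - u) ^ 2 * (u ^ n * expWeight β A s u)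
      ≤ ∫ u in Ioo (0 : ℝ) 1, (2 * (ρ - (1 - d)) ^ 2 * (u ^ n * expWeight β A s u) +
          2 * w ^ 2 * (C * m) * cauchyKernel w⁻¹ (u - (1 - d))) :=
        integral_mono_of_nonneg ((ae_restrict_iff' measurableSet_Ioo).mpr (.of_forall fun u hu =>
          mul_nonneg (sq_nonneg _) (hW.pow_mul_pos n hu).le)) (hint₁.add hint₂)
          ((ae_restrict_iff' measurableSet_Ioo).mpr (.of_forall hpoint))
    _ ≤ 2 * (ρ - (1 - d)) ^ 2 * m + 2 * w ^ 2 * (C * m) * Real.pi := by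
        rw [integral_add hint₁ hint₂, integral_const_mul, integral_const_mul]
        gcongr
        · exact le_rfl
        · exact setIntegral_cauchyKernel_sub_le (inv_pos.mpr hwd) _ _
    _ ≤ (2 + 2 * C * Real.pi) * m * (w ^ 2 + (ρ - (1 - d)) ^ 2) := by
        have := Real.pi_pos
        linarith [show 0 ≤ m * w ^ 2 by positivity,
          show 0 ≤ C * Real.pi * (m * (ρ - (1 - d)) ^ 2) by positivity]

lemma exists_sq_peakWidth_mul_le (s : ℝ) (hβ : 0 < β) (hA : 0 < A) (M : ℕ) :
    ∃ C : ℝ, 0 < C ∧ ∀ (n : ℕ) (d : ℝ), IsPeak β A n d → ∀ x ∈ Ico (0 : ℝ) 1,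
      peakWidth β d ^ 2 * (peakDeviation β d (1 - x) ^ M * (x ^ n * expWeight β A s x)) ≤
        C * powMoment (expWeight β A s) n *
          cauchyKernel (peakWidth β (1 - x)) (n - peakIndex β A (1 - x)) := by
  obtain ⟨C₁, hC₁, M₁, hindex⟩ := exists_one_add_sq_peakIndex_sub_le hβ.le hA.le
  obtain ⟨C₂, hC₂, hle⟩ := exists_peakDeviation_pow_mul_le s hβ hA (M + M₁ + ⌈1 + β / 2⌉₊)
  refine ⟨C₁ * C₂, by positivity, fun n d hn x hx => ?_⟩
  have hδ : 0 < 1 - x := sub_pos.mpr hx.2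
  have hwd := peakWidth_pos (β := β) hn.1.1
  have hwx := peakWidth_pos (β := β) hδ
  have hm := (isPosWeight_expWeight s hβ hA).powMoment_pos n
  have hcauchy : cauchyKernel (peakWidth β d)⁻¹ (x - (1 - d)) ≤ (peakWidth β d)⁻¹ :=
    div_le_self (inv_pos.mpr hwd).le (le_add_of_nonneg_right (sq_nonneg _))
  have hindex := hindex d hn.1 (1 - x) hδ
  have hle := (hle n d hn x hx).trans (mul_le_mul_of_nonneg_left hcauchy (by positivity))
  have hwidth := peakWidth_left_le_peakDeviation_pow_mul hβ.le hn.1.1 hδ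
  have hQ := one_le_peakDeviation (β := β) hn.1.1 hδ
  have hf : 0 ≤ x ^ n * expWeight β A s x :=
    mul_nonneg (pow_nonneg hx.1 n) (expWeight_pos hx.2).le
  rw [← hn.2, cauchyKernel, ← mul_div_assoc, le_div_iff₀ (by positivity)]
  rw [hn.2] at hindex ⊢
  set Q := peakDeviation β d (1 - x)
  set f := x ^ n * expWeight β A s x
  set m := powMoment (expWeight β A s) n
  set I := 1 + (peakWidth β (1 - x) * (n - peakIndex β A (1 - x))) ^ 2
  calc peakWidth β d ^ 2 * (Q ^ M * f) * I
      ≤ peakWidth β d ^ 2 * (Q ^ M * f) * (C₁ * Q ^ M₁) := by gcongr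
    _ = C₁ * peakWidth β d * (Q ^ (M + M₁) * f) * peakWidth β d := by ring
    _ ≤ C₁ * peakWidth β d * (Q ^ (M + M₁) * f) *
          (Q ^ ⌈1 + β / 2⌉₊ * peakWidth β (1 - x)) := by gcongr
    _ = C₁ * peakWidth β d * (Q ^ (M + M₁ + ⌈1 + β / 2⌉₊) * f) * peakWidth β (1 - x) := by ring
    _ ≤ C₁ * peakWidth β d * (C₂ * m * (peakWidth β d)⁻¹) * peakWidth β (1 - x) := by gcongr
    _ = C₁ * C₂ * m * peakWidth β (1 - x) := by field_simp

end Concentration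

section BoundarySeries

/-- The boundary values `∑ c_n e^{inθ}` of the power series with coefficients `c`, as a function of
the angle. -/
def boundarySeries (c : ℕ → ℂ) (θ : ℝ) : ℂ := ∑' n, c n * Complex.exp (θ * I) ^ n

variable {c : ℕ → ℂ}

lemma summable_mul_exp_pow (hc : Summable fun n => ‖c n‖) (θ : ℝ) :
    Summable fun n => c n * Complex.exp (θ * I) ^ n :=
  .of_norm (by simpa using hc)

lemma continuous_boundarySeries (hc : Summable fun n => ‖c n‖) :
    Continuous (boundarySeries c) :=
  continuous_tsum (fun n => by fun_prop) hc fun n θ => by simp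

lemma hasSum_norm_sq_of_orthonormal {𝕜 E ι : Type*} [RCLike 𝕜] [NormedAddCommGroup E]
    [InnerProductSpace 𝕜 E] {v : ι → E} (hv : Orthonormal 𝕜 v) {a : ι → 𝕜} {x : E}
    (hx : HasSum (fun i => a i • v i) x) : HasSum (fun i => ‖a i‖ ^ 2) (‖x‖ ^ 2) := by
  have hfin (s : Finset ι) : ∑ i ∈ s, ‖a i‖ ^ 2 = ‖∑ i ∈ s, a i • v i‖ ^ 2 := by
    rw [← inner_self_eq_norm_sq (𝕜 := 𝕜), hv.inner_sum, map_sum]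
    exact Finset.sum_congr rfl fun i _ => by
      rw [RCLike.conj_mul, ← RCLike.ofReal_pow, RCLike.ofReal_re]
  unfold HasSum
  simp only [hfin]
  exact (hx.norm).pow 2

lemma hasSum_norm_sq_boundarySeries (hc : Summable fun n => ‖c n‖) :
    HasSum (fun n => ‖c n‖ ^ 2)
      ((2 * Real.pi)⁻¹ * ∫ θ in Ioc (-Real.pi) Real.pi, ‖boundarySeries c θ‖ ^ 2) := by
  have : Fact (0 < 2 * Real.pi) := ⟨Real.two_pi_pos⟩
  let e (n : ℕ) : C(AddCircle (2 * Real.pi), ℂ) := fourier n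
  have hF : HasSum (fun n => c n • e n) (∑' n, c n • e n) :=
    (Summable.of_norm (by simpa [norm_smul, e, fourier_norm] using hc)).hasSum
  set F := ∑' n, c n • e n
  have heval (θ : ℝ) : boundarySeries c θ = F θ := by
    refine Eq.trans ?_ ((ContinuousMap.evalCLM ℂ (θ : AddCircle (2 * Real.pi))).hasSum hF).tsum_eq
    refine tsum_congr fun n => ?_
    have harg : 2 * Real.pi * I * (n : ℤ) * θ / (2 * Real.pi : ℝ) = n * (θ * I) := by
      push_cast
      field_simp
    change _ = c n * fourier n (θ : AddCircle (2 * Real.pi))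
    rw [fourier_coe_apply, harg, Complex.exp_nat_mul]
  have hnorm : ‖ContinuousMap.toLp (E := ℂ) 2 AddCircle.haarAddCircle ℂ F‖ ^ 2 =
      (2 * Real.pi)⁻¹ * ∫ θ in Ioc (-Real.pi) Real.pi, ‖boundarySeries c θ‖ ^ 2 := by
    have hint := AddCircle.integral_preimage (2 * Real.pi) (-Real.pi) fun x => ‖F x‖ ^ 2
    rw [show -Real.pi + 2 * Real.pi = Real.pi by ring] at hint
    simp only [heval]
    rw [hint]
    refine Eq.trans ?_ AddCircle.integral_haarAddCircle
    rw [← inner_self_eq_norm_sq (𝕜 := ℂ), ContinuousMap.inner_toLp]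
    simp only [Complex.mul_conj', ← Complex.ofReal_pow]
    rw [integral_complex_ofReal]
    exact RCLike.ofReal_re _
  rw [← hnorm]
  have horth : Orthonormal ℂ fun n : ℕ => fourierLp (T := 2 * Real.pi) 2 n :=
    orthonormal_fourier.comp _ Nat.cast_injective
  refine hasSum_norm_sq_of_orthonormal horth ?_
  simpa [Function.comp_def, e] using
    (ContinuousMap.toLp (E := ℂ) 2 AddCircle.haarAddCircle ℂ).hasSum hF

lemma lintegral_norm_sq_boundarySeries (hc : Summable fun n => ‖c n‖) :
    ∫⁻ θ in Ioo (-Real.pi) Real.pi, ENNReal.ofReal (‖boundarySeries c θ‖ ^ 2) =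
      ENNReal.ofReal (2 * Real.pi) * ∑' n, ENNReal.ofReal (‖c n‖ ^ 2) := by
  have hsum := hasSum_norm_sq_boundarySeries hc
  have hint : IntegrableOn (fun θ => ‖boundarySeries c θ‖ ^ 2) (Ioc (-Real.pi) Real.pi) :=
    ((continuous_boundarySeries hc).norm.pow 2).integrableOn_Ioc
  rw [← ENNReal.ofReal_tsum_of_nonneg (fun n => sq_nonneg _) hsum.summable, hsum.tsum_eq,
    ← ENNReal.ofReal_mul Real.two_pi_pos.le, mul_inv_cancel_left₀ Real.two_pi_pos.ne',
    ofReal_integral_eq_lintegral_ofReal hint (.of_forall fun θ => sq_nonneg _)]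
  exact setLIntegral_congr Ioo_ae_eq_Ioc

/-- The coefficients of `(1 - z) * ∑ c_n z^n`. -/
def diffCoeff (c : ℕ → ℂ) : ℕ → ℂ
  | 0 => c 0
  | n + 1 => c (n + 1) - c n

lemma summable_norm_diffCoeff (hc : Summable fun n => ‖c n‖) :
    Summable fun n => ‖diffCoeff c n‖ :=
  (summable_nat_add_iff 1).mp <| .of_nonneg_of_le (fun _ => norm_nonneg _)
    (fun n => norm_sub_le (c (n + 1)) (c n)) (((summable_nat_add_iff 1).mpr hc).add hc)

lemma boundarySeries_diffCoeff (hc : Summable fun n => ‖c n‖) (θ : ℝ) :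
    boundarySeries (diffCoeff c) θ = (1 - Complex.exp (θ * I)) * boundarySeries c θ := by
  have hsum := summable_mul_exp_pow hc θ
  have hshift := (summable_nat_add_iff 1).mpr hsum
  unfold boundarySeries
  rw [(summable_mul_exp_pow (summable_norm_diffCoeff hc) θ).tsum_eq_zero_add, sub_mul, one_mul,
    ← tsum_mul_left, hsum.tsum_eq_zero_add, add_sub_assoc, ← hshift.tsum_sub (hsum.mul_left _)]
  exact congrArg₂ (· + ·) rfl (tsum_congr fun n => by simp only [diffCoeff]; ring)

/-- The square of the norm of `∑ c_n e^{inθ}` in the weighted space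
`L²((t² + |1 - e^{iθ}|²) dθ / 2π)`, in terms of the coefficients. -/
def boundaryEnergy (t : ℝ) (c : ℕ → ℂ) : ℝ≥0∞ :=
  ENNReal.ofReal (‖c 0‖ ^ 2) +
    ∑' n, ENNReal.ofReal (t ^ 2 * ‖c n‖ ^ 2 + ‖c (n + 1) - c n‖ ^ 2)

lemma lintegral_norm_sq_boundarySeries_mul (hc : Summable fun n => ‖c n‖) (t : ℝ) :
    ∫⁻ θ in Ioo (-Real.pi) Real.pi, ENNReal.ofReal (‖boundarySeries c θ‖ ^ 2 *
        (t ^ 2 + ‖1 - Complex.exp (θ * I)‖ ^ 2)) =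
      ENNReal.ofReal (2 * Real.pi) * boundaryEnergy t c := by
  have hsplit (θ : ℝ) : ENNReal.ofReal (‖boundarySeries c θ‖ ^ 2 *
      (t ^ 2 + ‖1 - Complex.exp (θ * I)‖ ^ 2)) =
        ENNReal.ofReal (t ^ 2) * ENNReal.ofReal (‖boundarySeries c θ‖ ^ 2) +
          ENNReal.ofReal (‖boundarySeries (diffCoeff c) θ‖ ^ 2) := by
    rw [boundarySeries_diffCoeff hc, ← ENNReal.ofReal_mul (by positivity),
      ← ENNReal.ofReal_add (by positivity) (by positivity), norm_mul]
    ring_nf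
  have hmeas : Measurable (boundarySeries c) := (continuous_boundarySeries hc).measurable
  have henergy : boundaryEnergy t c = ENNReal.ofReal (t ^ 2) * ∑' n, ENNReal.ofReal (‖c n‖ ^ 2) +
      ∑' n, ENNReal.ofReal (‖diffCoeff c n‖ ^ 2) := by
    have hterm (n : ℕ) : ENNReal.ofReal (t ^ 2 * ‖c n‖ ^ 2 + ‖c (n + 1) - c n‖ ^ 2) =
        ENNReal.ofReal (t ^ 2) * ENNReal.ofReal (‖c n‖ ^ 2) +
          ENNReal.ofReal (‖c (n + 1) - c n‖ ^ 2) := by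
      rw [ENNReal.ofReal_add (by positivity) (by positivity), ENNReal.ofReal_mul (by positivity)]
    rw [tsum_eq_zero_add' (f := fun n => ENNReal.ofReal (‖diffCoeff c n‖ ^ 2)) ENNReal.summable]
    simp only [boundaryEnergy, hterm, ENNReal.tsum_add, ENNReal.tsum_mul_left, diffCoeff]
    ring
  simp only [hsplit]
  rw [lintegral_add_left (by fun_prop), lintegral_const_mul' _ _ ENNReal.ofReal_ne_top,
    lintegral_norm_sq_boundarySeries hc,
    lintegral_norm_sq_boundarySeries (summable_norm_diffCoeff hc), henergy]
  ring

lemma two_div_pi_mul_abs_le_norm_one_sub_exp {θ : ℝ} (hθ : |θ| ≤ Real.pi) :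
    2 / Real.pi * |θ| ≤ ‖1 - Complex.exp (θ * I)‖ := by
  have hsin := Real.mul_abs_le_abs_sin (x := θ / 2) (by rw [abs_div, abs_two]; linarith)
  rw [abs_div, abs_two] at hsin
  rw [norm_sub_rev, mul_comm (θ : ℂ) I, Complex.norm_exp_I_mul_ofReal_sub_one, norm_mul,
    Real.norm_eq_abs, Real.norm_eq_abs, abs_two]
  linarith

lemma lintegral_inv_sq_add_norm_one_sub_exp_sq_le {t : ℝ} (ht : 0 < t) :
    ∫⁻ θ in Ioo (-Real.pi) Real.pi,
        ENNReal.ofReal (t ^ 2 + ‖1 - Complex.exp (θ * I)‖ ^ 2)⁻¹ ≤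
      ENNReal.ofReal (Real.pi ^ 2 / (2 * t)) := by
  set l := 2 / (Real.pi * t) with hl
  have hl₀ : 0 < l := by positivity
  calc ∫⁻ θ in Ioo (-Real.pi) Real.pi, ENNReal.ofReal (t ^ 2 + ‖1 - Complex.exp (θ * I)‖ ^ 2)⁻¹
      ≤ ∫⁻ θ in Ioo (-Real.pi) Real.pi, ENNReal.ofReal (Real.pi / (2 * t)) *
          ENNReal.ofReal (cauchyKernel l (θ - 0)) := by
        refine setLIntegral_mono' measurableSet_Ioo fun θ hθ => ?_
        rw [← ENNReal.ofReal_mul (by positivity)]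
        refine ENNReal.ofReal_le_ofReal ?_
        calc (t ^ 2 + ‖1 - Complex.exp (θ * I)‖ ^ 2)⁻¹
            ≤ (t ^ 2 + (2 / Real.pi * |θ|) ^ 2)⁻¹ := by
              gcongr
              exact two_div_pi_mul_abs_le_norm_one_sub_exp (abs_le.mpr ⟨hθ.1.le, hθ.2.le⟩)
          _ = Real.pi / (2 * t) * cauchyKernel l (θ - 0) := by
              rw [cauchyKernel, hl, sub_zero, mul_pow, sq_abs]
              field_simp
    _ ≤ ENNReal.ofReal (Real.pi / (2 * t)) * ENNReal.ofReal Real.pi := by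
        rw [lintegral_const_mul' _ _ ENNReal.ofReal_ne_top, ← lintegral_cauchyKernel_sub hl₀ 0]
        gcongr
        exact Measure.restrict_le_self
    _ = ENNReal.ofReal (Real.pi ^ 2 / (2 * t)) := by
        rw [← ENNReal.ofReal_mul (by positivity)]
        ring_nf

lemma le_sq_mul_add_inv (a : ℝ) {b : ℝ} (hb : 0 < b) : a ≤ a ^ 2 * b + b⁻¹ := by
  have hb' := inv_pos.mpr hb
  have hcancel := mul_inv_cancel₀ hb.ne'
  nlinarith [mul_nonneg hb.le (sq_nonneg (a - b⁻¹)), mul_nonneg hb.le (sq_nonneg a)]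

lemma lintegral_mul_norm_boundarySeries_le (hc : Summable fun n => ‖c n‖) {t k w : ℝ} (ht : 0 < t)
    (hk : 0 < k) :
    ∫⁻ θ in Ioo (-Real.pi) Real.pi, ENNReal.ofReal (w * ‖boundarySeries c θ‖) ≤
      ENNReal.ofReal (2 * Real.pi) * (ENNReal.ofReal (w ^ 2 * k) * boundaryEnergy t c) +
        ENNReal.ofReal (Real.pi ^ 2 / (2 * t) * k⁻¹) := by
  have hpoint (θ : ℝ) : ENNReal.ofReal (w * ‖boundarySeries c θ‖) ≤
      ENNReal.ofReal (w ^ 2 * k) * ENNReal.ofReal (‖boundarySeries c θ‖ ^ 2 *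
          (t ^ 2 + ‖1 - Complex.exp (θ * I)‖ ^ 2)) +
        ENNReal.ofReal k⁻¹ * ENNReal.ofReal (t ^ 2 + ‖1 - Complex.exp (θ * I)‖ ^ 2)⁻¹ := by
    rw [← ENNReal.ofReal_mul (by positivity), ← ENNReal.ofReal_mul (by positivity),
      ← ENNReal.ofReal_add (by positivity) (by positivity), ← mul_inv]
    refine ENNReal.ofReal_le_ofReal ((le_sq_mul_add_inv _
      (b := k * (t ^ 2 + ‖1 - Complex.exp (θ * I)‖ ^ 2)) (by positivity)).trans_eq ?_)
    ring
  refine (lintegral_mono hpoint).trans ?_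
  rw [lintegral_add_right _ (by fun_prop), lintegral_const_mul' _ _ ENNReal.ofReal_ne_top,
    lintegral_const_mul' _ _ ENNReal.ofReal_ne_top, lintegral_norm_sq_boundarySeries_mul hc,
    mul_left_comm, mul_comm (Real.pi ^ 2 / (2 * t)),
    ENNReal.ofReal_mul (p := k⁻¹) (by positivity)]
  gcongr
  exact lintegral_inv_sq_add_norm_one_sub_exp_sq_le ht

end BoundarySeries

section Schur

variable {β A : ℝ}

lemma expWeight_add_mul_expWeight_sub_le (s : ℝ) {a d x y : ℝ} {M : ℕ} (hd : 0 < d) (hx : x < 1)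
    (hy : y < 1) (ha : |a| ≤ M) :
    expWeight β A (s + a) x * expWeight β A (s - a) y ≤
      peakDeviation β d (1 - x) ^ M * peakDeviation β d (1 - y) ^ M *
        (expWeight β A s x * expWeight β A s y) := by
  have hδ : 0 < 1 - x := sub_pos.mpr hx
  have hε : 0 < 1 - y := sub_pos.mpr hy
  have hpow : (1 - x) ^ a * (1 - y) ^ (-a) =
      ((1 - x) / d) ^ a * ((1 - y) / d) ^ (-a) := by
    rw [Real.div_rpow hδ.le hd.le, Real.div_rpow hε.le hd.le, Real.rpow_neg hd.le]
    field_simp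
  have hQx := one_le_peakDeviation (β := β) hd hδ
  have hWx := expWeight_pos (β := β) (A := A) (s := s) hx
  have hWy := expWeight_pos (β := β) (A := A) (s := s) hy
  rw [← rpow_mul_expWeight hx, sub_eq_add_neg s, ← rpow_mul_expWeight hy, mul_mul_mul_comm, hpow]
  gcongr
  · exact rpow_div_le_peakDeviation_pow hd hδ ha
  · exact rpow_div_le_peakDeviation_pow hd hε (by rwa [abs_neg])

lemma one_add_sq_div_peakWidth_le {d δ ε : ℝ} (hβ : 0 ≤ β) (hd : 0 < d) (hδ : 0 < δ)
    (hε : 0 < ε) :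
    1 + ((δ - ε) / peakWidth β δ) ^ 2 ≤
      2 * peakDeviation β d δ ^ (2 * ⌈1 + β / 2⌉₊ + 1) * peakDeviation β d ε := by
  have hwd := peakWidth_pos (β := β) hd
  have hwδ := peakWidth_pos (β := β) hδ
  have hwidth := peakWidth_left_le_peakDeviation_pow_mul hβ hd hδ
  have hQδ := one_le_peakDeviation (β := β) hd hδ
  have hX := one_add_sq_le_peakDeviation (β := β) hd hδ
  have hY := one_add_sq_le_peakDeviation (β := β) hd hε
  set k := ⌈1 + β / 2⌉₊
  set Q := peakDeviation β d δ
  set X := (δ - d) / peakWidth β d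
  set Y := (ε - d) / peakWidth β d
  have hXY : (δ - ε) / peakWidth β δ = (X - Y) * (peakWidth β d / peakWidth β δ) := by
    simp only [X, Y]; field_simp; ring
  have hratio : peakWidth β d / peakWidth β δ ≤ Q ^ k := (div_le_iff₀ hwδ).mpr hwidth
  calc 1 + ((δ - ε) / peakWidth β δ) ^ 2
      ≤ (Q ^ k) ^ 2 + (X - Y) ^ 2 * (Q ^ k) ^ 2 := by
        rw [hXY, mul_pow]
        gcongr
        exact one_le_pow₀ (one_le_pow₀ hQδ)
    _ = (1 + (X - Y) ^ 2) * Q ^ (2 * k) := by rw [← pow_mul, mul_comm k]; ring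
    _ ≤ 2 * ((1 + X ^ 2) * (1 + Y ^ 2)) * Q ^ (2 * k) := by
        gcongr
        nlinarith [sq_nonneg (X + Y), sq_nonneg (X * Y)]
    _ ≤ 2 * (Q * peakDeviation β d ε) * Q ^ (2 * k) := by gcongr
    _ = 2 * Q ^ (2 * k + 1) * peakDeviation β d ε := by ring

lemma sq_sub_le_add_of_sq_eq_mul {x y ρ : ℝ} (hx : 0 ≤ x) (hy : 0 ≤ y) (hρ : 0 ≤ ρ)
    (h : ρ ^ 2 = x * y) (c : ℝ) : (ρ - c) ^ 2 ≤ (x - c) ^ 2 + (y - c) ^ 2 := by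
  wlog hxy : x ≤ y generalizing x y
  · rw [add_comm]
    exact this hy hx (by rw [h, mul_comm]) (le_of_not_ge hxy)
  have hxρ : x ≤ ρ := by nlinarith
  have hρy : ρ ≤ y := by nlinarith
  rcases le_total c ρ with hc | hc <;> nlinarith [sq_nonneg (x - c), sq_nonneg (y - c)]

lemma sq_peakWidth_add_sq_sub_le {d x y ρ : ℝ} (hd : 0 < d) (hx : x ∈ Ico (0 : ℝ) 1)
    (hy : y ∈ Ico (0 : ℝ) 1) (hρ : 0 ≤ ρ) (h : ρ ^ 2 = x * y) :
    peakWidth β d ^ 2 + (ρ - (1 - d)) ^ 2 ≤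
      peakWidth β d ^ 2 * (peakDeviation β d (1 - x) * peakDeviation β d (1 - y)) := by
  have hwd := peakWidth_pos (β := β) hd
  have hQx := one_le_peakDeviation (β := β) hd (sub_pos.mpr hx.2)
  have hX := one_add_sq_le_peakDeviation (β := β) hd (sub_pos.mpr hx.2)
  have hY := one_add_sq_le_peakDeviation (β := β) hd (sub_pos.mpr hy.2)
  have hbetween := sq_sub_le_add_of_sq_eq_mul hx.1 hy.1 hρ h (1 - d)
  set X := (1 - x - d) / peakWidth β d with hXdef
  set Y := (1 - y - d) / peakWidth β d with hYdef
  have hx' : (x - (1 - d)) ^ 2 = peakWidth β d ^ 2 * X ^ 2 := by rw [hXdef]; field_simp; ring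
  have hy' : (y - (1 - d)) ^ 2 = peakWidth β d ^ 2 * Y ^ 2 := by rw [hYdef]; field_simp; ring
  calc peakWidth β d ^ 2 + (ρ - (1 - d)) ^ 2
      ≤ peakWidth β d ^ 2 * (1 + X ^ 2 + Y ^ 2) := by linarith
    _ ≤ peakWidth β d ^ 2 * ((1 + X ^ 2) * (1 + Y ^ 2)) := by
        gcongr
        nlinarith [sq_nonneg (X * Y)]
    _ ≤ _ := by gcongr

lemma exists_sq_coeff_sub_le_of_isPeak (s : ℝ) (hβ : 0 < β) (hA : 0 < A) :
    ∃ C : ℝ, 0 < C ∧ ∀ (n : ℕ) (d : ℝ), IsPeak β A n d → ∀ ρ : ℝ,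
      (ρ ^ (n + 1) / powMoment (expWeight β A s) (n + 1) -
          ρ ^ n / powMoment (expWeight β A s) n) ^ 2 ≤
        C * (peakWidth β d ^ 2 + (ρ - (1 - d)) ^ 2) *
          (ρ ^ n / powMoment (expWeight β A s) n) ^ 2 := by
  obtain ⟨C, hC, hvar⟩ := exists_integral_sub_sq_mul_le s hβ hA
  have hW := isPosWeight_expWeight s hβ hA
  set m := powMoment (expWeight β A s)
  have hm : ∀ n, 0 < m n := hW.powMoment_pos
  refine ⟨(m 0 / m 1) ^ 2 * C, mul_pos (pow_pos (div_pos (hm 0) (hm 1)) 2) hC,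
    fun n d hn ρ => ?_⟩
  have hvar' : (∫ u in Ioo (0 : ℝ) 1, (ρ - u) ^ 2 * (u ^ n * expWeight β A s u)) / m n ≤
      C * (peakWidth β d ^ 2 + (ρ - (1 - d)) ^ 2) := by
    rw [div_le_iff₀ (hm n), mul_right_comm]
    exact hvar n d hn ρ
  calc (ρ ^ (n + 1) / m (n + 1) - ρ ^ n / m n) ^ 2
      ≤ (m 0 / m 1) ^ 2 * (ρ ^ n / m n) ^ 2 *
          (C * (peakWidth β d ^ 2 + (ρ - (1 - d)) ^ 2)) :=
        (hW.sq_coeff_sub_le ρ n).trans (by gcongr)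
    _ = _ := by ring

lemma exists_coeff_energy_le (s : ℝ) (hβ : 0 < β) (hA : 0 < A) :
    ∃ C : ℝ, 0 < C ∧ ∀ (n : ℕ) (d : ℝ), IsPeak β A n d → ∀ x ∈ Ico (0 : ℝ) 1,
      ∀ y ∈ Ico (0 : ℝ) 1, ∀ ρ : ℝ, 0 ≤ ρ → ρ ^ 2 = x * y →
        peakWidth β (1 - x) ^ 2 * (ρ ^ n / powMoment (expWeight β A s) n) ^ 2 +
            (ρ ^ (n + 1) / powMoment (expWeight β A s) (n + 1) -
              ρ ^ n / powMoment (expWeight β A s) n) ^ 2 ≤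
          C * (peakDeviation β d (1 - x) ^ (2 * ⌈1 + β / 2⌉₊ + 1) * peakDeviation β d (1 - y) *
            peakWidth β d ^ 2) * (ρ ^ n / powMoment (expWeight β A s) n) ^ 2 := by
  obtain ⟨C, hC, hdiff⟩ := exists_sq_coeff_sub_le_of_isPeak s hβ hA
  refine ⟨1 + C, by positivity, fun n d hn x hx y hy ρ hρ h => ?_⟩
  have hd := hn.1.1
  have hwidth := peakWidth_right_le_peakDeviation_pow_mul hβ.le hd (sub_pos.mpr hx.2)
  have hspread := sq_peakWidth_add_sq_sub_le (β := β) hd hx hy hρ h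
  have hwd := peakWidth_pos (β := β) hd
  have hwx := peakWidth_pos (β := β) (sub_pos.mpr hx.2)
  have hQx := one_le_peakDeviation (β := β) hd (sub_pos.mpr hx.2)
  have hQy := one_le_peakDeviation (β := β) hd (sub_pos.mpr hy.2)
  have hdiff := hdiff n d hn ρ
  set k := ⌈1 + β / 2⌉₊
  set Qx := peakDeviation β d (1 - x)
  set Qy := peakDeviation β d (1 - y)
  set w := peakWidth β d
  set c := ρ ^ n / powMoment (expWeight β A s) n
  have hwidth_sq : peakWidth β (1 - x) ^ 2 ≤ Qx ^ (2 * k + 1) * Qy * w ^ 2 := by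
    calc peakWidth β (1 - x) ^ 2 ≤ (Qx ^ k * w) ^ 2 := by gcongr
      _ = Qx ^ (2 * k) * 1 * w ^ 2 := by rw [mul_pow, ← pow_mul, mul_comm k, mul_one]
      _ ≤ Qx ^ (2 * k + 1) * Qy * w ^ 2 := by
          gcongr
          exact Nat.le_succ _
  have hspread_le : w ^ 2 + (ρ - (1 - d)) ^ 2 ≤ Qx ^ (2 * k + 1) * Qy * w ^ 2 := by
    refine hspread.trans (le_of_eq_of_le (mul_comm _ _) ?_)
    gcongr
    exact le_self_pow₀ hQx (Nat.succ_ne_zero _)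
  calc _ ≤ Qx ^ (2 * k + 1) * Qy * w ^ 2 * c ^ 2 +
          C * (Qx ^ (2 * k + 1) * Qy * w ^ 2) * c ^ 2 :=
        add_le_add (by gcongr) (hdiff.trans (by gcongr))
    _ = _ := by ring

lemma exists_weighted_coeff_energy_le (s a : ℝ) (hβ : 0 < β) (hA : 0 < A) :
    ∃ (C : ℝ) (M : ℕ), 0 < C ∧ ∀ (n : ℕ) (d : ℝ), IsPeak β A n d → ∀ x ∈ Ico (0 : ℝ) 1,
      ∀ y ∈ Ico (0 : ℝ) 1, ∀ ρ : ℝ, 0 ≤ ρ → ρ ^ 2 = x * y →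
        expWeight β A (s + a) x * expWeight β A (s - a) y *
            (1 + ((x - y) / peakWidth β (1 - x)) ^ 2) *
            (peakWidth β (1 - x) ^ 2 * (ρ ^ n / powMoment (expWeight β A s) n) ^ 2 +
              (ρ ^ (n + 1) / powMoment (expWeight β A s) (n + 1) -
                ρ ^ n / powMoment (expWeight β A s) n) ^ 2) ≤
          C / powMoment (expWeight β A s) n ^ 2 *
            (peakWidth β d ^ 2 * (peakDeviation β d (1 - x) ^ M * (x ^ n * expWeight β A s x))) *
            (peakDeviation β d (1 - y) ^ M * (y ^ n * expWeight β A s y)) := by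
  obtain ⟨C, hC, henergy⟩ := exists_coeff_energy_le s hβ hA
  set k := ⌈1 + β / 2⌉₊
  refine ⟨2 * C, ⌈|a|⌉₊ + 2 * (2 * k + 1), by positivity, fun n d hn x hx y hy ρ hρ h => ?_⟩
  have hd := hn.1.1
  have henergy := henergy n d hn x hx y hy ρ hρ h
  have hWx := expWeight_pos (β := β) (A := A) (s := s) hx.2
  have hWy := expWeight_pos (β := β) (A := A) (s := s) hy.2
  have hVx := expWeight_pos (β := β) (A := A) (s := s + a) hx.2
  have hGy := expWeight_pos (β := β) (A := A) (s := s - a) hy.2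
  have hx₀ := hx.1
  have hy₀ := hy.1
  have hweights := expWeight_add_mul_expWeight_sub_le (β := β) (A := A) s hd hx.2 hy.2
    (Nat.le_ceil |a|)
  have hwidth := one_add_sq_div_peakWidth_le hβ.le hd (sub_pos.mpr hx.2) (sub_pos.mpr hy.2)
  rw [sub_sub_sub_cancel_left, ← neg_sub, neg_div, neg_sq] at hwidth
  have hQx := one_le_peakDeviation (β := β) hd (sub_pos.mpr hx.2)
  have hQy := one_le_peakDeviation (β := β) hd (sub_pos.mpr hy.2)
  have hcoeff : (ρ ^ n / powMoment (expWeight β A s) n) ^ 2 =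
      x ^ n * y ^ n / powMoment (expWeight β A s) n ^ 2 := by
    rw [div_pow, pow_right_comm, h, mul_pow]
  rw [hcoeff] at henergy ⊢
  set Qx := peakDeviation β d (1 - x)
  set Qy := peakDeviation β d (1 - y)
  set m := powMoment (expWeight β A s)
  calc _ ≤ Qx ^ ⌈|a|⌉₊ * Qy ^ ⌈|a|⌉₊ * (expWeight β A s x * expWeight β A s y) *
          (2 * Qx ^ (2 * k + 1) * Qy) *
          (C * (Qx ^ (2 * k + 1) * Qy * peakWidth β d ^ 2) * (x ^ n * y ^ n / m n ^ 2)) := by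
        gcongr
    _ = 2 * C / m n ^ 2 * (peakWidth β d ^ 2 *
          (Qx ^ (⌈|a|⌉₊ + 2 * (2 * k + 1)) * (x ^ n * expWeight β A s x))) *
          (Qy ^ (⌈|a|⌉₊ + 2) * (y ^ n * expWeight β A s y)) := by ring
    _ ≤ _ := by
        gcongr
        omega

lemma exists_expWeight_mul_one_add_sq_div_peakWidth_le (s a : ℝ) (hβ : 0 < β) (hA : 0 < A) :
    ∃ C : ℝ, 0 < C ∧ ∀ x ∈ Ico (0 : ℝ) 1, ∀ y ∈ Ico (0 : ℝ) 1,
      expWeight β A (s + a) x * expWeight β A (s - a) y *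
        (1 + ((x - y) / peakWidth β (1 - x)) ^ 2) ≤ C := by
  obtain ⟨C₁, hC₁, hx_le⟩ := exists_expWeight_le (s + a + -(2 + β)) hβ hA
  obtain ⟨C₂, hC₂, hy_le⟩ := exists_expWeight_le (s - a) hβ hA
  refine ⟨2 * C₁ * C₂, by positivity, fun x hx y hy => ?_⟩
  have hδ : 0 < 1 - x := sub_pos.mpr hx.2
  have hw := peakWidth_pos (β := β) hδ
  have hw_le : peakWidth β (1 - x) ≤ 1 := peakWidth_le_one hβ.le ⟨hδ, sub_le_self 1 hx.1⟩
  have hV := expWeight_pos (β := β) (A := A) (s := s + a) hx.2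
  have hinv : (peakWidth β (1 - x) ^ 2)⁻¹ = (1 - x) ^ (-(2 + β)) := by
    rw [Real.rpow_neg hδ.le, peakWidth, ← Real.rpow_mul_natCast hδ.le]
    congr 2
    push_cast
    ring
  have hle : 1 + ((x - y) / peakWidth β (1 - x)) ^ 2 ≤ 2 * (1 - x) ^ (-(2 + β)) := by
    rw [← hinv, div_pow, two_mul, div_eq_mul_inv]
    refine add_le_add ?_ (mul_le_of_le_one_left (by positivity) ?_)
    · exact (one_le_inv₀ (by positivity)).mpr (pow_le_one₀ hw.le hw_le)
    · rw [sq_le_one_iff_abs_le_one, abs_le]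
      constructor <;> linarith [hx.1, hx.2, hy.1, hy.2]
  calc _ ≤ expWeight β A (s + a) x * C₂ * (2 * (1 - x) ^ (-(2 + β))) := by
        gcongr
        exact hy_le y hy
    _ = 2 * ((1 - x) ^ (-(2 + β)) * expWeight β A (s + a) x) * C₂ := by ring
    _ ≤ 2 * C₁ * C₂ := by
        rw [rpow_mul_expWeight hx.2]
        gcongr
        exact hx_le x hx

/-- The coefficients of `∑ n, (ρ e^{iθ}) ^ n / powMoment W n`, which up to the rotation `θ` is the
Bergman kernel of the weight `ζ ↦ W (|ζ|²)` at points with `|z||ζ| = ρ`. -/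
def kernelCoeff (W : ℝ → ℝ) (ρ : ℝ) (n : ℕ) : ℂ := ((ρ ^ n / powMoment W n : ℝ) : ℂ)

lemma boundaryEnergy_kernelCoeff (W : ℝ → ℝ) (t ρ : ℝ) :
    boundaryEnergy t (kernelCoeff W ρ) = ENNReal.ofReal ((powMoment W 0 ^ 2)⁻¹) +
      ∑' n, ENNReal.ofReal (t ^ 2 * (ρ ^ n / powMoment W n) ^ 2 +
        (ρ ^ (n + 1) / powMoment W (n + 1) - ρ ^ n / powMoment W n) ^ 2) := by
  simp only [boundaryEnergy, kernelCoeff, ← Complex.ofReal_sub, Complex.norm_real,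
    Real.norm_eq_abs, sq_abs, pow_zero, one_div, inv_pow]

lemma IsPosWeight.summable_norm_kernelCoeff {W : ℝ → ℝ} (hW : IsPosWeight W) {ρ : ℝ}
    (hρ : ρ ∈ Ico (0 : ℝ) 1) : Summable fun n => ‖kernelCoeff W ρ n‖ := by
  simpa only [kernelCoeff, Complex.norm_real] using (hW.summable_pow_div_powMoment hρ).norm

lemma exists_mul_boundaryEnergy_kernelCoeff_le (s a : ℝ) (hβ : 0 < β) (hA : 0 < A) :
    ∃ (C₀ C : ℝ) (M : ℕ), 0 < C₀ ∧ 0 < C ∧ ∀ d : ℕ → ℝ, (∀ n : ℕ, IsPeak β A n (d n)) →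
      ∀ x ∈ Ico (0 : ℝ) 1, ∀ y ∈ Ico (0 : ℝ) 1,
        ENNReal.ofReal (expWeight β A (s + a) x * expWeight β A (s - a) y *
            (1 + ((x - y) / peakWidth β (1 - x)) ^ 2)) *
            boundaryEnergy (peakWidth β (1 - x)) (kernelCoeff (expWeight β A s) √(x * y)) ≤
          ENNReal.ofReal C₀ + ∑' n, ENNReal.ofReal (C / powMoment (expWeight β A s) n *
              cauchyKernel (peakWidth β (1 - x)) (n - peakIndex β A (1 - x))) *
            ENNReal.ofReal
              (peakDeviation β (d n) (1 - y) ^ M * (y ^ n * expWeight β A s y)) := by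
  obtain ⟨C₁, M, hC₁, henergy⟩ := exists_weighted_coeff_energy_le s a hβ hA
  obtain ⟨C₂, hC₂, hpeak⟩ := exists_sq_peakWidth_mul_le s hβ hA M
  obtain ⟨C₃, hC₃, hconst⟩ := exists_expWeight_mul_one_add_sq_div_peakWidth_le s a hβ hA
  have hm := (isPosWeight_expWeight s hβ hA).powMoment_pos
  have hm₀ := hm 0
  set m := powMoment (expWeight β A s)
  refine ⟨C₃ * (m 0 ^ 2)⁻¹, C₁ * C₂, M, by positivity, by positivity, fun d hd x hx y hy => ?_⟩
  have hV := expWeight_pos (β := β) (A := A) (s := s + a) hx.2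
  have hG := expWeight_pos (β := β) (A := A) (s := s - a) hy.2
  have hWy := expWeight_pos (β := β) (A := A) (s := s) hy.2
  rw [boundaryEnergy_kernelCoeff, mul_add, ← ENNReal.tsum_mul_left]
  refine add_le_add ?_ (ENNReal.tsum_le_tsum fun n => ?_)
  · rw [← ENNReal.ofReal_mul (by positivity)]
    exact ENNReal.ofReal_le_ofReal (by gcongr; exact hconst x hx y hy)
  · have hmn := hm n
    have hκ := cauchyKernel_nonneg (peakWidth_pos (β := β) (sub_pos.mpr hx.2)).le
      (n - peakIndex β A (1 - x))
    have hQy := one_le_peakDeviation (β := β) (hd n).1.1 (sub_pos.mpr hy.2)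
    have hy₀ := hy.1
    rw [← ENNReal.ofReal_mul (by positivity), ← ENNReal.ofReal_mul (by positivity)]
    refine ENNReal.ofReal_le_ofReal ((henergy n (d n) (hd n) x hx y hy _ (Real.sqrt_nonneg _)
      (Real.sq_sqrt (mul_nonneg hx.1 hy.1))).trans (mul_le_mul_of_nonneg_right ?_ (by positivity)))
    calc C₁ / m n ^ 2 * (peakWidth β (d n) ^ 2 *
          (peakDeviation β (d n) (1 - x) ^ M * (x ^ n * expWeight β A s x)))
        ≤ C₁ / m n ^ 2 * (C₂ * m n *
            cauchyKernel (peakWidth β (1 - x)) (n - peakIndex β A (1 - x))) := by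
          refine mul_le_mul_of_nonneg_left ?_ (by positivity)
          exact hpeak n (d n) (hd n) x hx
      _ = _ := by field_simp

lemma exists_lintegral_mul_boundaryEnergy_kernelCoeff_le (s a : ℝ) (hβ : 0 < β) (hA : 0 < A) :
    ∃ C : ℝ, 0 < C ∧ ∀ x ∈ Ico (0 : ℝ) 1, ∫⁻ y in Ioo (0 : ℝ) 1,
      ENNReal.ofReal (expWeight β A (s + a) x * expWeight β A (s - a) y *
          (1 + ((x - y) / peakWidth β (1 - x)) ^ 2)) *
        boundaryEnergy (peakWidth β (1 - x)) (kernelCoeff (expWeight β A s) √(x * y)) ≤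
      ENNReal.ofReal C := by
  obtain ⟨C₀, C₁, M, hC₀, hC₁, henergy⟩ := exists_mul_boundaryEnergy_kernelCoeff_le s a hβ hA
  obtain ⟨C₂, hC₂, hmass⟩ := exists_lintegral_peakDeviation_pow_mul_le s hβ hA M
  choose d hd using fun n : ℕ => exists_isPeak hβ hA n
  refine ⟨C₀ + C₁ * C₂ * (3 * Real.pi), by positivity, fun x hx => ?_⟩
  have hδ : 0 < 1 - x := sub_pos.mpr hx.2
  have hw := peakWidth_pos (β := β) hδ
  have hw_le : peakWidth β (1 - x) ≤ 1 := peakWidth_le_one hβ.le ⟨hδ, sub_le_self 1 hx.1⟩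
  have hm := (isPosWeight_expWeight s hβ hA).powMoment_pos
  set m := powMoment (expWeight β A s)
  set κ : ℕ → ℝ := fun n => cauchyKernel (peakWidth β (1 - x)) (n - peakIndex β A (1 - x))
  have hκ n : 0 ≤ κ n := cauchyKernel_nonneg hw.le _
  set B : ℕ → ℝ → ℝ≥0∞ := fun n y => ENNReal.ofReal
    (peakDeviation β (d n) (1 - y) ^ M * (y ^ n * expWeight β A s y))
  have hB n : Measurable (B n) := by
    have := measurable_expWeight (β := β) (A := A) (s := s)
    have := measurable_peakDeviation (β := β) (d := d n)
    fun_prop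
  calc _ ≤ ∫⁻ y in Ioo (0 : ℝ) 1, (ENNReal.ofReal C₀ +
          ∑' n, ENNReal.ofReal (C₁ / m n * κ n) * B n y) :=
        setLIntegral_mono' measurableSet_Ioo fun y hy =>
          henergy d hd x hx y (Ioo_subset_Ico_self hy)
    _ = ENNReal.ofReal C₀ + ∑' n, ENNReal.ofReal (C₁ / m n * κ n) *
          ∫⁻ y in Ioo (0 : ℝ) 1, B n y := by
        rw [lintegral_add_left measurable_const,
          lintegral_tsum fun n => ((hB n).const_mul _).aemeasurable]
        simp [lintegral_const_mul' _ _ ENNReal.ofReal_ne_top]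
    _ ≤ ENNReal.ofReal C₀ + ∑' n, ENNReal.ofReal (C₁ * C₂) * ENNReal.ofReal (κ n) := by
        refine add_le_add_right (ENNReal.tsum_le_tsum fun n => ?_) _
        have hmn := hm n
        refine (mul_le_mul_right (hmass n (d n) (hd n)) _).trans_eq ?_
        rw [← ENNReal.ofReal_mul (mul_nonneg (by positivity) (hκ n)),
          ← ENNReal.ofReal_mul (by positivity)]
        congr 1
        field_simp
    _ ≤ ENNReal.ofReal C₀ + ENNReal.ofReal (C₁ * C₂) * ENNReal.ofReal (3 * Real.pi) := by
        rw [ENNReal.tsum_mul_left]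
        gcongr
        exact tsum_cauchyKernel_natCast_sub_le ⟨hw, hw_le⟩ _
    _ = ENNReal.ofReal (C₀ + C₁ * C₂ * (3 * Real.pi)) := by
        rw [← ENNReal.ofReal_mul (by positivity), ← ENNReal.ofReal_add hC₀.le (by positivity)]

lemma lintegral_mul_norm_boundarySeries_le_cauchyKernel {c : ℕ → ℂ}
    (hc : Summable fun n => ‖c n‖) {t : ℝ} (ht : 0 < t) (w x y : ℝ) :
    ∫⁻ θ in Ioo (-Real.pi) Real.pi, ENNReal.ofReal (w * ‖boundarySeries c θ‖) ≤
      ENNReal.ofReal (2 * Real.pi) *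
          (ENNReal.ofReal (w ^ 2 * (1 + ((x - y) / t) ^ 2)) * boundaryEnergy t c) +
        ENNReal.ofReal (Real.pi ^ 2 / 2) * ENNReal.ofReal (cauchyKernel t⁻¹ (y - x)) := by
  have hcauchy : Real.pi ^ 2 / (2 * t) * (1 + ((x - y) / t) ^ 2)⁻¹ =
      Real.pi ^ 2 / 2 * cauchyKernel t⁻¹ (y - x) := by
    rw [cauchyKernel, inv_mul_eq_div, ← neg_sub x y, neg_div, neg_sq]
    field_simp
  rw [← ENNReal.ofReal_mul (by positivity), ← hcauchy]
  exact lintegral_mul_norm_boundarySeries_le hc ht (by positivity)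

lemma exists_lintegral_mul_norm_boundarySeries_le {α : ℝ} (σ γ : ℝ) (hα : 0 < α) (hβ : 0 < β) :
    ∃ C : ℝ, 0 < C ∧ ∀ x ∈ Ico (0 : ℝ) 1,
      ∫⁻ y in Ioo (0 : ℝ) 1, ∫⁻ θ in Ioo (-Real.pi) Real.pi,
        ENNReal.ofReal (expWeight β α γ x * expWeight β α (2 * σ - γ) y *
          ‖boundarySeries (kernelCoeff (expWeight β (2 * α) (2 * σ)) √(x * y)) θ‖) ≤
      ENNReal.ofReal C := by
  have h2α : 0 < 2 * α := by positivity
  obtain ⟨C, hC, henergy⟩ :=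
    exists_lintegral_mul_boundaryEnergy_kernelCoeff_le (2 * σ) (2 * γ - 2 * σ) hβ h2α
  refine ⟨2 * Real.pi * C + Real.pi ^ 2 / 2 * Real.pi, by positivity, fun x hx => ?_⟩
  have hW := isPosWeight_expWeight (2 * σ) hβ h2α
  have henergy := henergy x hx
  have ht := peakWidth_pos (β := β) (sub_pos.mpr hx.2)
  set t := peakWidth β (1 - x)
  set E : ℝ → ℝ≥0∞ := fun y =>
    ENNReal.ofReal (expWeight β (2 * α) (2 * σ + (2 * γ - 2 * σ)) x *
      expWeight β (2 * α) (2 * σ - (2 * γ - 2 * σ)) y * (1 + ((x - y) / t) ^ 2)) *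
        boundaryEnergy t (kernelCoeff (expWeight β (2 * α) (2 * σ)) √(x * y))
  have hpoint : ∀ y ∈ Ioo (0 : ℝ) 1, ∫⁻ θ in Ioo (-Real.pi) Real.pi,
      ENNReal.ofReal (expWeight β α γ x * expWeight β α (2 * σ - γ) y *
        ‖boundarySeries (kernelCoeff (expWeight β (2 * α) (2 * σ)) √(x * y)) θ‖) ≤
      ENNReal.ofReal (2 * Real.pi) * E y +
        ENNReal.ofReal (Real.pi ^ 2 / 2) * ENNReal.ofReal (cauchyKernel t⁻¹ (y - x)) := by
    intro y hy
    have hρ : √(x * y) ∈ Ico (0 : ℝ) 1 :=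
      ⟨Real.sqrt_nonneg _, (Real.sqrt_lt' one_pos).mpr (by nlinarith [hx.1, hx.2, hy.1, hy.2])⟩
    refine (lintegral_mul_norm_boundarySeries_le_cauchyKernel
      (hW.summable_norm_kernelCoeff hρ) ht _ x y).trans_eq ?_
    rw [mul_pow, expWeight_sq hx.2, expWeight_sq hy.2,
      show 2 * γ = 2 * σ + (2 * γ - 2 * σ) by ring,
      show 2 * (2 * σ - γ) = 2 * σ - (2 * γ - 2 * σ) by ring]
  calc _ ≤ ∫⁻ y in Ioo (0 : ℝ) 1, (ENNReal.ofReal (2 * Real.pi) * E y +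
          ENNReal.ofReal (Real.pi ^ 2 / 2) * ENNReal.ofReal (cauchyKernel t⁻¹ (y - x))) :=
        setLIntegral_mono' measurableSet_Ioo hpoint
    _ = ENNReal.ofReal (2 * Real.pi) * (∫⁻ y in Ioo (0 : ℝ) 1, E y) +
          ENNReal.ofReal (Real.pi ^ 2 / 2) *
            ∫⁻ y in Ioo (0 : ℝ) 1, ENNReal.ofReal (cauchyKernel t⁻¹ (y - x)) := by
        rw [lintegral_add_right _ (by unfold cauchyKernel; fun_prop),
          lintegral_const_mul' _ _ ENNReal.ofReal_ne_top,
          lintegral_const_mul' _ _ ENNReal.ofReal_ne_top]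
    _ ≤ ENNReal.ofReal (2 * Real.pi) * ENNReal.ofReal C +
          ENNReal.ofReal (Real.pi ^ 2 / 2) * ENNReal.ofReal Real.pi := by
        rw [← lintegral_cauchyKernel_sub (inv_pos.mpr ht) x]
        gcongr
        exact Measure.restrict_le_self
    _ = _ := by
        rw [← ENNReal.ofReal_mul (by positivity), ← ENNReal.ofReal_mul (by positivity),
          ← ENNReal.ofReal_add (by positivity) (by positivity)]

end Schur

section Disc

lemma measurableSet_unitDisc : MeasurableSet unitDisc := measurableSet_ball

lemma mem_unitDisc {z : ℂ} : z ∈ unitDisc ↔ ‖z‖ < 1 := mem_ball_zero_iff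

lemma norm_sq_mem_Ico {z : ℂ} (hz : z ∈ unitDisc) : ‖z‖ ^ 2 ∈ Ico (0 : ℝ) 1 :=
  ⟨sq_nonneg _, pow_lt_one₀ (norm_nonneg z) (mem_unitDisc.mp hz) two_ne_zero⟩

lemma mul_conj_mem_unitDisc {z ζ : ℂ} (hz : z ∈ unitDisc) (hζ : ζ ∈ unitDisc) :
    z * starRingEnd ℂ ζ ∈ unitDisc := by
  rw [mem_unitDisc, norm_mul, RCLike.norm_conj]
  exact mul_lt_one_of_nonneg_of_lt_one_left (norm_nonneg z) (mem_unitDisc.mp hz)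
    (mem_unitDisc.mp hζ).le

instance isFiniteMeasure_restrict_unitDisc : IsFiniteMeasure (volume.restrict unitDisc) :=
  isFiniteMeasure_restrict.mpr measure_ball_lt_top.ne

lemma setLIntegral_unitDisc_comp_rotation (u : Circle) (g : ℂ → ℝ≥0∞) :
    ∫⁻ ζ in unitDisc, g (u * ζ) = ∫⁻ ζ in unitDisc, g ζ := by
  have hpre : rotation u ⁻¹' unitDisc = unitDisc := by
    ext ζ
    simp only [mem_preimage, mem_unitDisc, LinearIsometryEquiv.norm_map]
  rw [← (rotation u).measurePreserving.setLIntegral_comp_preimage_emb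
    (rotation u).toHomeomorph.measurableEmbedding g, hpre]
  rfl

lemma setLIntegral_unitDisc_le_polar (g : ℂ → ℝ≥0∞) :
    ∫⁻ ζ in unitDisc, g ζ ≤ ∫⁻ r in Ioo (0 : ℝ) 1,
      ENNReal.ofReal r * ∫⁻ θ in Ioo (-Real.pi) Real.pi, g (r * Complex.exp (θ * I)) := by
  have hsymm (r θ : ℝ) : Complex.polarCoord.symm (r, θ) = r * Complex.exp (θ * I) := by
    rw [Complex.polarCoord_symm_apply, Complex.exp_mul_I, Complex.ofReal_cos, Complex.ofReal_sin]
  have hangle : ∀ r ∈ Ioi (0 : ℝ), ∫⁻ θ in Ioo (-Real.pi) Real.pi,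
      ENNReal.ofReal r • unitDisc.indicator g (Complex.polarCoord.symm (r, θ)) =
      (Ioo (0 : ℝ) 1).indicator (fun r => ENNReal.ofReal r *
        ∫⁻ θ in Ioo (-Real.pi) Real.pi, g (r * Complex.exp (θ * I))) r := by
    intro r hr
    have hmem (θ : ℝ) : (r * Complex.exp (θ * I) : ℂ) ∈ unitDisc ↔ r ∈ Ioo (0 : ℝ) 1 := by
      rw [mem_unitDisc, norm_mul, Complex.norm_exp_ofReal_mul_I, mul_one, Complex.norm_real,
        Real.norm_of_nonneg (mem_Ioi.mp hr).le, mem_Ioo, and_iff_right (mem_Ioi.mp hr)]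
    simp only [hsymm, smul_eq_mul, lintegral_const_mul' _ _ ENNReal.ofReal_ne_top]
    by_cases hr₁ : r ∈ Ioo (0 : ℝ) 1
    · simp only [indicator_of_mem ((hmem _).mpr hr₁), indicator_of_mem hr₁]
    · simp only [indicator_of_notMem (mt (hmem _).mp hr₁), indicator_of_notMem hr₁,
        lintegral_zero, mul_zero]
  calc ∫⁻ ζ in unitDisc, g ζ
      = ∫⁻ p in Ioi (0 : ℝ) ×ˢ Ioo (-Real.pi) Real.pi,
          ENNReal.ofReal p.1 • unitDisc.indicator g (Complex.polarCoord.symm p) := by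
        rw [← lintegral_indicator measurableSet_unitDisc, ← polarCoord_target,
          Complex.lintegral_comp_polarCoord_symm]
    _ ≤ ∫⁻ r in Ioi (0 : ℝ), ∫⁻ θ in Ioo (-Real.pi) Real.pi,
          ENNReal.ofReal r • unitDisc.indicator g (Complex.polarCoord.symm (r, θ)) := by
        rw [Measure.volume_eq_prod, ← Measure.prod_restrict]
        exact lintegral_prod_le _
    _ = _ := by
        rw [setLIntegral_congr_fun measurableSet_Ioi hangle, setLIntegral_indicator
          measurableSet_Ioo, inter_eq_left.mpr Ioo_subset_Ioi_self]

lemma two_mul_setLIntegral_unitDisc_le (g : ℂ → ℝ≥0∞) :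
    2 * ∫⁻ ζ in unitDisc, g ζ ≤ ∫⁻ y in Ioo (0 : ℝ) 1, ∫⁻ θ in Ioo (-Real.pi) Real.pi,
      g (√y * Complex.exp (θ * I)) := by
  calc 2 * ∫⁻ ζ in unitDisc, g ζ
      ≤ 2 * ∫⁻ r in Ioo (0 : ℝ) 1,
          ENNReal.ofReal r * ∫⁻ θ in Ioo (-Real.pi) Real.pi, g (r * Complex.exp (θ * I)) := by
        gcongr
        exact setLIntegral_unitDisc_le_polar g
    _ = ∫⁻ r in Ioo (0 : ℝ) 1, ENNReal.ofReal |2 * r| *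
          ∫⁻ θ in Ioo (-Real.pi) Real.pi, g (√(r ^ 2) * Complex.exp (θ * I)) := by
        rw [← lintegral_const_mul' _ _ ENNReal.ofNat_ne_top]
        refine setLIntegral_congr_fun measurableSet_Ioo fun r hr => ?_
        simp only [Real.sqrt_sq hr.1.le, abs_mul, abs_of_pos hr.1, Nat.abs_ofNat,
          ENNReal.ofReal_mul zero_le_two, ENNReal.ofReal_ofNat, mul_assoc]
    _ = _ := by
        rw [← lintegral_image_eq_lintegral_abs_deriv_mul measurableSet_Ioo
          (fun s _ => hasDerivWithinAt_sq s _) injOn_sq_Ioo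
          (fun y => ∫⁻ θ in Ioo (-Real.pi) Real.pi, g (√y * Complex.exp (θ * I))), image_sq_Ioo]

section ParametricIntegral

variable {h K : ℂ → ℂ} {z : ℂ}

lemma integrableOn_mul_comp_mul_conj (hh : IntegrableOn h unitDisc)
    (hK : ContinuousOn K unitDisc) (hz : z ∈ unitDisc) :
    IntegrableOn (fun ζ => h ζ * K (z * starRingEnd ℂ ζ)) unitDisc := by
  obtain ⟨M, hM⟩ := (isCompact_closedBall (0 : ℂ) ‖z‖).exists_bound_of_continuousOn
    (hK.mono (Metric.closedBall_subset_ball (mem_unitDisc.mp hz)))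
  have hcomp : ContinuousOn (fun ζ => K (z * starRingEnd ℂ ζ)) unitDisc :=
    hK.comp (by fun_prop) fun ζ hζ => mul_conj_mem_unitDisc hz hζ
  refine hh.mul_bdd (c := M) (hcomp.aestronglyMeasurable measurableSet_unitDisc) ?_
  filter_upwards [ae_restrict_mem measurableSet_unitDisc] with ζ hζ
  refine hM _ (mem_closedBall_zero_iff.mpr ?_)
  rw [norm_mul, RCLike.norm_conj]
  exact mul_le_of_le_one_right (norm_nonneg z) (mem_unitDisc.mp hζ).le

lemma differentiableOn_integral_mul_comp_mul_conj (hh : IntegrableOn h unitDisc)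
    (hK : DifferentiableOn ℂ K unitDisc) :
    DifferentiableOn ℂ (fun z => ∫ ζ in unitDisc, h ζ * K (z * starRingEnd ℂ ζ)) unitDisc := by
  intro z hz
  obtain ⟨r, hzr, hr⟩ := exists_between (mem_unitDisc.mp hz)
  have hK' : ContinuousOn (deriv K) unitDisc := (hK.deriv Metric.isOpen_ball).continuousOn
  obtain ⟨M, hM⟩ := (isCompact_closedBall (0 : ℂ) r).exists_bound_of_continuousOn
    (hK'.mono (Metric.closedBall_subset_ball hr))
  have hball : Metric.ball (0 : ℂ) r ∈ nhds z :=
    Metric.isOpen_ball.mem_nhds (mem_ball_zero_iff.mpr hzr)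
  have hint : ∀ w ∈ Metric.ball (0 : ℂ) r,
      IntegrableOn (fun ζ => h ζ * K (w * starRingEnd ℂ ζ)) unitDisc := fun w hw =>
    integrableOn_mul_comp_mul_conj hh hK.continuousOn (Metric.ball_subset_ball hr.le hw)
  have hdisc := ae_restrict_mem (μ := volume) measurableSet_unitDisc
  refine (hasDerivAt_integral_of_dominated_loc_of_deriv_le
    (F := fun w ζ => h ζ * K (w * starRingEnd ℂ ζ))
    (F' := fun w ζ => h ζ * (deriv K (w * starRingEnd ℂ ζ) * starRingEnd ℂ ζ))
    (bound := fun ζ => ‖h ζ‖ * M) hball ?_ (hint z (mem_ball_zero_iff.mpr hzr)) ?_ ?_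
    (hh.norm.mul_const M) ?_).2.differentiableAt.differentiableWithinAt
  · filter_upwards [hball] with w hw using (hint w hw).aestronglyMeasurable
  · refine hh.aestronglyMeasurable.mul (ContinuousOn.aestronglyMeasurable ?_
      measurableSet_unitDisc)
    exact (hK'.comp (by fun_prop) fun ζ hζ => mul_conj_mem_unitDisc hz hζ).mul (by fun_prop)
  · filter_upwards [hdisc] with ζ hζ w hw
    rw [mem_ball_zero_iff] at hw
    have hζ₁ := (mem_unitDisc.mp hζ).le
    have hw_le : ‖w * starRingEnd ℂ ζ‖ ≤ r := by
      rw [norm_mul, RCLike.norm_conj]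
      exact (mul_le_of_le_one_right (norm_nonneg w) hζ₁).trans hw.le
    rw [norm_mul, norm_mul, RCLike.norm_conj]
    gcongr
    exact (mul_le_of_le_one_right (norm_nonneg _) hζ₁).trans
      (hM _ (mem_closedBall_zero_iff.mpr hw_le))
  · filter_upwards [hdisc] with ζ hζ w hw
    have hmem := mul_conj_mem_unitDisc (Metric.ball_subset_ball hr.le hw) hζ
    have hK_at := (hK.differentiableAt (Metric.isOpen_ball.mem_nhds hmem)).hasDerivAt
    exact (hK_at.comp w (hasDerivAt_mul_const _)).const_mul _

end ParametricIntegral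

end Disc

section BergmanProjection

variable {W : ℝ → ℝ} {f : ℂ → ℂ} {z : ℂ}

/-- The Bergman kernel of the radial weight `ζ ↦ W (|ζ|²)` as a function of `conj z * ζ`. -/
def kernelSeries (W : ℝ → ℝ) (w : ℂ) : ℂ := ∑' n, w ^ n / (powMoment W n : ℂ)

lemma bKer_eq_kernelSeries (W : ℝ → ℝ) (z ζ : ℂ) :
    bKer (fun s => W (s ^ 2)) z ζ = kernelSeries W (starRingEnd ℂ z * ζ) := by
  simp only [bKer, kernelSeries, two_mul_mom_sq]

lemma conj_kernelSeries (W : ℝ → ℝ) (w : ℂ) :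
    starRingEnd ℂ (kernelSeries W w) = kernelSeries W (starRingEnd ℂ w) := by
  simp only [kernelSeries, Complex.conj_tsum, map_div₀, map_pow, Complex.conj_ofReal]

lemma norm_kernelSeries_mul_conj (W : ℝ → ℝ) (z ζ : ℂ) :
    ‖kernelSeries W (z * starRingEnd ℂ ζ)‖ = ‖kernelSeries W (starRingEnd ℂ z * ζ)‖ := by
  rw [← RCLike.norm_conj, conj_kernelSeries, map_mul, Complex.conj_conj]

lemma kernelSeries_mul_exp (W : ℝ → ℝ) (ρ θ : ℝ) :
    kernelSeries W (ρ * Complex.exp (θ * I)) = boundarySeries (kernelCoeff W ρ) θ := by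
  refine tsum_congr fun n => ?_
  rw [kernelCoeff]
  push_cast
  ring

lemma IsPosWeight.differentiableOn_kernelSeries (hW : IsPosWeight W) :
    DifferentiableOn ℂ (kernelSeries W) unitDisc := by
  intro w hw
  obtain ⟨r, hwr, hr⟩ := exists_between (mem_unitDisc.mp hw)
  have hdiff : DifferentiableOn ℂ (kernelSeries W) (Metric.ball 0 r) :=
    differentiableOn_tsum_of_summable_norm
      (hW.summable_pow_div_powMoment ⟨(norm_nonneg w).trans hwr.le, hr⟩)
      (fun n => by fun_prop) Metric.isOpen_ball fun n v hv => by
        have hm := hW.powMoment_pos n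
        rw [norm_div, norm_pow, Complex.norm_real, Real.norm_of_nonneg hm.le]
        gcongr
        exact (mem_ball_zero_iff.mp hv).le
  exact (hdiff.differentiableAt
    (Metric.isOpen_ball.mem_nhds (mem_ball_zero_iff.mpr hwr))).differentiableWithinAt

lemma bInt_eq_mul_kernelSeries (W : ℝ → ℝ) (f : ℂ → ℂ) (z : ℂ) :
    bInt (fun s => W (s ^ 2)) f z =
      fun ζ => f ζ * (W (‖ζ‖ ^ 2) : ℂ) * kernelSeries W (z * starRingEnd ℂ ζ) := by
  funext ζ
  rw [bInt, bKer_eq_kernelSeries, conj_kernelSeries, map_mul, Complex.conj_conj, mul_right_comm]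

lemma IsPosWeight.integrableOn_bInt (hW : IsPosWeight W)
    (hf : IntegrableOn (fun ζ => f ζ * (W (‖ζ‖ ^ 2) : ℂ)) unitDisc) (hz : z ∈ unitDisc) :
    IntegrableOn (bInt (fun s => W (s ^ 2)) f z) unitDisc := by
  rw [bInt_eq_mul_kernelSeries]
  exact integrableOn_mul_comp_mul_conj hf hW.differentiableOn_kernelSeries.continuousOn hz

lemma IsPosWeight.differentiableOn_bProj (hW : IsPosWeight W)
    (hf : IntegrableOn (fun ζ => f ζ * (W (‖ζ‖ ^ 2) : ℂ)) unitDisc) :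
    DifferentiableOn ℂ (bProj (fun s => W (s ^ 2)) f) unitDisc := by
  unfold bProj
  simp only [bInt_eq_mul_kernelSeries]
  exact (differentiableOn_integral_mul_comp_mul_conj hf
    hW.differentiableOn_kernelSeries).const_mul _

lemma setLIntegral_unitDisc_radial_mul_kernelSeries_le (W G : ℝ → ℝ) (v : ℝ) (z : ℂ) :
    2 * ∫⁻ ζ in unitDisc,
        ENNReal.ofReal (v * G (‖ζ‖ ^ 2) * ‖kernelSeries W (starRingEnd ℂ z * ζ)‖) ≤
      ∫⁻ y in Ioo (0 : ℝ) 1, ∫⁻ θ in Ioo (-Real.pi) Real.pi,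
        ENNReal.ofReal (v * G y * ‖boundarySeries (kernelCoeff W √(‖z‖ ^ 2 * y)) θ‖) := by
  have hrot : starRingEnd ℂ z * Circle.exp (Complex.arg z) = ‖z‖ := by
    rw [Circle.coe_exp]
    nth_rw 1 [← Complex.norm_mul_exp_arg_mul_I z]
    rw [map_mul, Complex.conj_ofReal, mul_assoc, ← Complex.exp_conj, ← Complex.exp_add]
    simp
  rw [← setLIntegral_unitDisc_comp_rotation (Circle.exp (Complex.arg z))]
  refine (two_mul_setLIntegral_unitDisc_le _).trans_eq
    (setLIntegral_congr_fun measurableSet_Ioo fun y hy => lintegral_congr fun θ => ?_)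
  have hnorm : ‖(Circle.exp (Complex.arg z) : ℂ) * (√y * Complex.exp (θ * I))‖ ^ 2 = y := by
    rw [norm_mul, Circle.norm_coe, one_mul, norm_mul, Complex.norm_exp_ofReal_mul_I, mul_one,
      Complex.norm_real, Real.norm_eq_abs, sq_abs, Real.sq_sqrt hy.1.le]
  rw [hnorm, ← mul_assoc (starRingEnd ℂ z), hrot, ← mul_assoc, ← Complex.ofReal_mul,
    kernelSeries_mul_exp, Real.sqrt_mul (sq_nonneg _), Real.sqrt_sq (norm_nonneg z)]

lemma ofReal_norm_bProj_mul_le {G : ℝ → ℝ} {v : ℝ} (hv : 0 ≤ v)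
    (hG : ∀ ζ ∈ unitDisc, ‖f ζ * (W (‖ζ‖ ^ 2) : ℂ)‖ ≤ G (‖ζ‖ ^ 2)) :
    ENNReal.ofReal (‖bProj (fun s => W (s ^ 2)) f z‖ * v) ≤ ENNReal.ofReal Real.pi⁻¹ *
      ∫⁻ ζ in unitDisc,
        ENNReal.ofReal (v * G (‖ζ‖ ^ 2) * ‖kernelSeries W (starRingEnd ℂ z * ζ)‖) := by
  rw [bProj, norm_mul, norm_inv, Complex.norm_real, Real.norm_of_nonneg Real.pi_nonneg, mul_assoc,
    ENNReal.ofReal_mul (inv_nonneg.mpr Real.pi_nonneg), ENNReal.ofReal_mul (norm_nonneg _),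
    ofReal_norm]
  gcongr
  calc _ ≤ (∫⁻ ζ in unitDisc, ‖bInt (fun s => W (s ^ 2)) f z ζ‖ₑ) * ENNReal.ofReal v := by
        gcongr
        exact enorm_integral_le_lintegral_enorm _
    _ = ∫⁻ ζ in unitDisc, ‖bInt (fun s => W (s ^ 2)) f z ζ‖ₑ * ENNReal.ofReal v :=
        (lintegral_mul_const' _ _ ENNReal.ofReal_ne_top).symm
    _ ≤ _ := by
        refine setLIntegral_mono' measurableSet_unitDisc fun ζ hζ => ?_
        rw [← ofReal_norm, ← ENNReal.ofReal_mul (norm_nonneg _), bInt_eq_mul_kernelSeries, norm_mul,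
          norm_kernelSeries_mul_conj, mul_comm _ v, ← mul_assoc]
        gcongr
        exact hG ζ hζ

lemma norm_mul_expWeight_le {α β σ γ : ℝ}
    (hf : ∀ z ∈ unitDisc, ‖f z‖ * expWeight β α γ (‖z‖ ^ 2) ≤ 1) (hz : z ∈ unitDisc) :
    ‖f z * (expWeight β (2 * α) (2 * σ) (‖z‖ ^ 2) : ℂ)‖ ≤
      expWeight β α (2 * σ - γ) (‖z‖ ^ 2) := by
  have hu := (norm_sq_mem_Ico hz).2
  have hsplit : expWeight β (2 * α) (2 * σ) (‖z‖ ^ 2) =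
      expWeight β α γ (‖z‖ ^ 2) * expWeight β α (2 * σ - γ) (‖z‖ ^ 2) := by
    rw [expWeight_mul_expWeight hu, add_sub_cancel, two_mul α]
  rw [norm_mul, Complex.norm_real, Real.norm_of_nonneg (expWeight_pos hu).le, hsplit, ← mul_assoc]
  exact mul_le_of_le_one_left (expWeight_pos hu).le (hf z hz)

lemma integrableOn_mul_expWeight {α β σ γ : ℝ} (hα : 0 < α) (hβ : 0 < β)
    (hfm : AEStronglyMeasurable f (volume.restrict unitDisc))
    (hf : ∀ z ∈ unitDisc, ‖f z‖ * expWeight β α γ (‖z‖ ^ 2) ≤ 1) :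
    IntegrableOn (fun ζ => f ζ * (expWeight β (2 * α) (2 * σ) (‖ζ‖ ^ 2) : ℂ)) unitDisc := by
  obtain ⟨C, -, hC⟩ := exists_expWeight_le (2 * σ - γ) hβ hα
  have hmeas : Measurable fun ζ : ℂ => (expWeight β (2 * α) (2 * σ) (‖ζ‖ ^ 2) : ℂ) :=
    Complex.measurable_ofReal.comp (measurable_expWeight.comp (by fun_prop))
  refine Integrable.of_bound (hfm.mul hmeas.aestronglyMeasurable) C ?_
  filter_upwards [ae_restrict_mem measurableSet_unitDisc] with ζ hζ
  exact (norm_mul_expWeight_le hf hζ).trans (hC _ (norm_sq_mem_Ico hζ))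

lemma exists_norm_bProj_mul_expWeight_le {α β : ℝ} (σ γ : ℝ) (hα : 0 < α) (hβ : 0 < β) :
    ∃ C : ℝ, 0 < C ∧ ∀ f : ℂ → ℂ,
      (∀ z ∈ unitDisc, ‖f z‖ * expWeight β α γ (‖z‖ ^ 2) ≤ 1) → ∀ z ∈ unitDisc,
        ‖bProj (fun s => expWeight β (2 * α) (2 * σ) (s ^ 2)) f z‖ *
          expWeight β α γ (‖z‖ ^ 2) ≤ C := by
  obtain ⟨C, hC, hSchur⟩ := exists_lintegral_mul_norm_boundarySeries_le σ γ hα hβ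
  refine ⟨Real.pi⁻¹ * C, by positivity, fun f hf z hz => ?_⟩
  rw [← ENNReal.ofReal_le_ofReal_iff (by positivity),
    ENNReal.ofReal_mul (p := Real.pi⁻¹) (by positivity)]
  refine (ofReal_norm_bProj_mul_le (expWeight_pos (norm_sq_mem_Ico hz).2).le
    fun ζ hζ => norm_mul_expWeight_le hf hζ).trans ?_
  gcongr
  calc _ ≤ 2 * _ := le_mul_of_one_le_left' one_le_two
    _ ≤ _ := setLIntegral_unitDisc_radial_mul_kernelSeries_le _ _ _ z
    _ ≤ ENNReal.ofReal C := hSchur _ (norm_sq_mem_Ico hz)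

end BergmanProjection

/-- Proposition: for `v(z) = (1-|z|²)^γ e^{-α/(1-|z|²)^β}` and
`ω(z) = (1-|z|²)^{2σ} e^{-2α/(1-|z|²)^β}`, the projection
`P_ω : L^∞_v → H^∞_v` is bounded. -/
theorem stmt7 (α β σ γ : ℝ) (hα : 0 < α) (hβ : 0 < β) :
    ∃ C : ℝ, 0 < C ∧ ∀ f : ℂ → ℂ,
      AEStronglyMeasurable f (volume.restrict unitDisc) →
      (∀ z ∈ unitDisc,
        ‖f z‖ * ((1 - ‖z‖ ^ 2) ^ γ * Real.exp (-α / (1 - ‖z‖ ^ 2) ^ β)) ≤ 1) →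
      (∀ z ∈ unitDisc,
        IntegrableOn
          (bInt (fun s => (1 - s ^ 2) ^ (2 * σ) *
            Real.exp (-(2 * α) / (1 - s ^ 2) ^ β)) f z) unitDisc) ∧
      DifferentiableOn ℂ
        (bProj (fun s => (1 - s ^ 2) ^ (2 * σ) *
          Real.exp (-(2 * α) / (1 - s ^ 2) ^ β)) f) unitDisc ∧
      ∀ z ∈ unitDisc,
        ‖bProj (fun s => (1 - s ^ 2) ^ (2 * σ) *
            Real.exp (-(2 * α) / (1 - s ^ 2) ^ β)) f z‖ *
          ((1 - ‖z‖ ^ 2) ^ γ * Real.exp (-α / (1 - ‖z‖ ^ 2) ^ β)) ≤ C := by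
  obtain ⟨C, hC, hbound⟩ := exists_norm_bProj_mul_expWeight_le σ γ hα hβ
  refine ⟨C, hC, fun f hfm hf => ?_⟩
  have hω := isPosWeight_expWeight (2 * σ) hβ (mul_pos two_pos hα)
  have hfω := integrableOn_mul_expWeight (σ := σ) hα hβ hfm hf
  exact ⟨fun z hz => hω.integrableOn_bInt hfω hz, hω.differentiableOn_bProj hfω, hbound f hf⟩
end
end

section
/- Let ω and ν be radial weights such that P_ω : L^∞_ν̂ → H^∞_ν̂ is bounded. If f is a complex-valued harmonic function on 𝔻 belonging to L^∞_ν̂, with series representation f(r e^{iθ}) = Σ_{m=−∞}^∞ f_m r^{|m|} e^{imθ} converging uniformly on compact subsets of 𝔻, then P_ω f(z) = Σ_{n=0}^∞ f_n z^n for every z ∈ 𝔻; that is, the restriction of P_ω to harmonic functions in L^∞_ν̂ coincides with the Szegő projection R. Consequently R is bounded from h^∞_ν̂ (the harmonic functions in L^∞_ν̂) to H^∞_ν̂. -/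
open MeasureTheory Set Complex
open scoped ENNReal

noncomputable section

/-! On each circle `|ζ| = r < 1` the harmonic series of `f` and the power series of the kernel
converge absolutely, so orthogonality of the characters `e^{imθ}` leaves only the diagonal terms
`a_n z^n r^{2n} / (2 ω_{2n+1})` in the circle average of `f · conj (B^ω_z)`. Integrating against
`2 r ω(r) dr` cancels the moments. Boundedness of `P_ω` supplies the absolute convergence of the
area integral, which is what makes the passage to polar coordinates legitimate. -/

section CircleAverage

variable {E : Type*} [NormedAddCommGroup E] [NormedSpace ℝ E]

theorem hasSum_circleAverage {ι : Type*} [Countable ι] {F : ι → ℂ → E} {f : ℂ → E} {b : ι → ℝ}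
    {c : ℂ} {R : ℝ} (hF : ∀ i, CircleIntegrable (F i) c R)
    (hFb : ∀ i, ∀ ζ ∈ Metric.sphere c |R|, ‖F i ζ‖ ≤ b i) (hb : Summable b)
    (hf : ∀ ζ ∈ Metric.sphere c |R|, HasSum (fun i => F i ζ) (f ζ)) :
    HasSum (fun i => Real.circleAverage (F i) c R) (Real.circleAverage f c R) := by
  have hmem := circleMap_mem_sphere' c R
  refine HasSum.const_smul _ <| intervalIntegral.hasSum_integral_of_dominated_convergence
    (fun i _ => b i) (fun i => (hF i).def'.aestronglyMeasurable) ?_ ?_ ?_ ?_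
  · exact fun i => .of_forall fun θ _ => hFb i _ (hmem θ)
  · exact .of_forall fun _ _ => hb
  · exact intervalIntegrable_const
  · exact .of_forall fun θ _ => hf _ (hmem θ)

theorem circleAverage_eq_integral_Ioo (g : ℂ → E) (c : ℂ) (R : ℝ) :
    Real.circleAverage g c R =
      (2 * Real.pi)⁻¹ • ∫ θ in Ioo (-Real.pi) Real.pi, g (circleMap c R θ) := by
  have hper : (fun θ => g (circleMap c R θ)).Periodic (2 * Real.pi) :=
    (periodic_circleMap c R).comp g
  rw [Real.circleAverage_def, ← integral_Ioc_eq_integral_Ioo,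
    ← intervalIntegral.integral_of_le (by linarith [Real.pi_pos])]
  congr 1
  convert hper.intervalIntegral_add_eq 0 (-Real.pi) using 2 <;> ring

theorem integrableOn_smul_comp_polarCoord_symm {g : ℂ → E} (hg : Integrable g) :
    IntegrableOn (fun p : ℝ × ℝ => p.1 • g (Complex.polarCoord.symm p)) polarCoord.target := by
  have hg' : Integrable (fun p : ℝ × ℝ => g (measurableEquivRealProd.symm p)) :=
    volume_preserving_equiv_real_prod.symm.integrable_comp_emb
      measurableEquivRealProd.symm.measurableEmbedding |>.2 hg
  have hjac := integrableOn_image_iff_integrableOn_abs_det_fderiv_smul volume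
    polarCoord.open_target.measurableSet
    (fun p _ => (hasFDerivAt_polarCoord_symm p).hasFDerivWithinAt)
    polarCoord.symm.injOn (fun p : ℝ × ℝ => g (measurableEquivRealProd.symm p)) |>.1
    hg'.integrableOn
  refine hjac.congr_fun (fun p hp => ?_) polarCoord.open_target.measurableSet
  simp only [det_fderivPolarCoordSymm, abs_of_pos (mem_Ioi.1 hp.1),
    measurableEquivRealProd_symm_polarCoord_symm_apply]

theorem integral_eq_integral_Ioi_circleAverage {g : ℂ → E} (hg : Integrable g) (c : ℂ) :
    ∫ z, g z = (2 * Real.pi) • ∫ r in Ioi (0 : ℝ), r • Real.circleAverage g c r := by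
  have hpolar := integrableOn_smul_comp_polarCoord_symm (hg.comp_add_left c)
  have hsymm : ∀ r θ : ℝ, c + Complex.polarCoord.symm (r, θ) = circleMap c r θ := fun r θ => by
    simp only [Complex.polarCoord_symm_apply, circleMap, exp_mul_I, ofReal_cos, ofReal_sin]
  rw [← integral_add_left_eq_self g c, ← Complex.integral_comp_polarCoord_symm]
  rw [polarCoord_target, Measure.volume_eq_prod] at hpolar ⊢
  rw [setIntegral_prod _ hpolar, ← integral_smul]
  refine integral_congr_ae (.of_forall fun r => ?_)
  simp only [hsymm, circleAverage_eq_integral_Ioo, integral_smul]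
  rw [smul_comm r, smul_inv_smul₀ (by positivity)]

theorem integral_ball_eq_integral_circleAverage {g : ℂ → E} {c : ℂ} {R : ℝ}
    (hg : IntegrableOn g (Metric.ball c R)) :
    ∫ z in Metric.ball c R, g z =
      (2 * Real.pi) • ∫ r in Ioo 0 R, r • Real.circleAverage g c r := by
  have hm : MeasurableSet (Metric.ball c R) := Metric.isOpen_ball.measurableSet
  have hmem : ∀ {r : ℝ}, 0 < r → ∀ ζ ∈ Metric.sphere c |r|, (ζ ∈ Metric.ball c R ↔ r < R) :=
    fun hr ζ hζ => by rw [Metric.mem_ball, Metric.mem_sphere.1 hζ, abs_of_pos hr]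
  rw [← integral_indicator hm,
    integral_eq_integral_Ioi_circleAverage (hg.integrable_indicator hm) c,
    setIntegral_eq_of_subset_of_forall_sdiff_eq_zero measurableSet_Ioi Ioo_subset_Ioi_self]
  · congr 1
    refine setIntegral_congr_fun measurableSet_Ioo fun r hr => congrArg (r • ·) ?_
    exact Real.circleAverage_congr_sphere fun ζ hζ =>
      indicator_of_mem ((hmem hr.1 ζ hζ).2 hr.2) g
  · rintro r ⟨hr, hrR⟩
    have hzero : EqOn ((Metric.ball c R).indicator g) (fun _ => 0) (Metric.sphere c |r|) :=
      fun ζ hζ => indicator_of_notMem (fun h => hrR ⟨hr, (hmem hr ζ hζ).1 h⟩) g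
    simp [Real.circleAverage_congr_sphere hzero, Real.circleAverage_def]

end CircleAverage

theorem integral_tsum_smul_of_integral_eq_one {α ι E : Type*} [MeasurableSpace α] {μ : Measure α}
    [Countable ι] [NormedAddCommGroup E] [NormedSpace ℝ E] [CompleteSpace E]
    {g : ι → α → ℝ} {c : ι → E} (hg : ∀ i, 0 ≤ᵐ[μ] g i) (hg1 : ∀ i, ∫ x, g i x ∂μ = 1)
    (hc : Summable fun i => ‖c i‖) :
    ∫ x, ∑' i, g i x • c i ∂μ = ∑' i, c i := by
  have hgi : ∀ i, Integrable (g i) μ := fun i => by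
    by_contra h
    simpa [integral_undef h] using hg1 i
  have hnorm : ∀ i, ∫ x, ‖g i x • c i‖ ∂μ = ‖c i‖ := fun i => by
    have : (fun x => ‖g i x • c i‖) =ᵐ[μ] fun x => g i x * ‖c i‖ := by
      filter_upwards [hg i] with x hx
      rw [norm_smul, Real.norm_of_nonneg hx]
    rw [integral_congr_ae this, integral_mul_const, hg1, one_mul]
  rw [← integral_tsum_of_summable_integral_norm (fun i => (hgi i).smul_const (c i))
    (by simpa only [hnorm] using hc)]
  simp only [integral_smul_const, hg1, one_smul]

/-- The harmonic monomial `r e^{iθ} ↦ r^{|m|} e^{imθ}` of degree `m ∈ ℤ`, in terms of which the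
series representation of a harmonic function is expressed. -/
def harmonicMonomial (m : ℤ) (z : ℂ) : ℂ :=
  if 0 ≤ m then z ^ m.toNat else (starRingEnd ℂ z) ^ (-m).toNat

namespace harmonicMonomial

theorem natCast (n : ℕ) (z : ℂ) : harmonicMonomial n z = z ^ n := by
  simp [harmonicMonomial]

theorem neg_natCast (n : ℕ) (z : ℂ) : harmonicMonomial (-n) z = starRingEnd ℂ z ^ n := by
  rcases n.eq_zero_or_pos with rfl | hn
  · simp [harmonicMonomial]
  · simp [harmonicMonomial, hn.ne']

theorem norm_eq (m : ℤ) (z : ℂ) : ‖harmonicMonomial m z‖ = ‖z‖ ^ m.natAbs := by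
  obtain ⟨n, rfl | rfl⟩ := m.eq_nat_or_neg
  · simp [natCast]
  · simp [neg_natCast]

theorem continuous (m : ℤ) : Continuous (harmonicMonomial m) := by
  unfold harmonicMonomial
  split_ifs <;> fun_prop

theorem apply_circleMap_zero (m : ℤ) (r θ : ℝ) :
    harmonicMonomial m (circleMap 0 r θ) = circleMap 0 (r ^ m.natAbs) (m * θ) := by
  obtain ⟨n, rfl | rfl⟩ := m.eq_nat_or_neg
  · simp [natCast, circleMap_zero_pow]
  · simp [neg_natCast, conj_circleMap_zero, circleMap_zero_pow]

end harmonicMonomial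

theorem integral_circleMap_zero_int_mul (R : ℝ) (k : ℤ) :
    ∫ θ in 0..2 * Real.pi, circleMap 0 R (k * θ) = if k = 0 then (2 * Real.pi * R : ℂ) else 0 := by
  split_ifs with hk
  · simp [hk, circleMap_zero]
  · have hk' : (k : ℂ) * I ≠ 0 := mul_ne_zero (Int.cast_ne_zero.2 hk) I_ne_zero
    have hexp : ∀ θ : ℝ, circleMap 0 R (k * θ) = R * exp (k * I * θ) := fun θ => by
      rw [circleMap_zero]
      push_cast
      ring_nf
    have hperiod : exp (k * I * (2 * Real.pi : ℝ)) = 1 :=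
      exp_eq_one_iff.2 ⟨k, by push_cast; ring⟩
    simp only [hexp, intervalIntegral.integral_const_mul, integral_exp_mul_complex hk', hperiod]
    simp

theorem circleAverage_harmonicMonomial_mul_conj_pow (m : ℤ) (n : ℕ) (r : ℝ) :
    Real.circleAverage (fun ζ => harmonicMonomial m ζ * starRingEnd ℂ ζ ^ n) 0 r =
      if m = n then (r : ℂ) ^ (2 * n) else 0 := by
  have hterm : ∀ θ : ℝ, harmonicMonomial m (circleMap 0 r θ) *
      starRingEnd ℂ (circleMap 0 r θ) ^ n =
        circleMap 0 (r ^ m.natAbs * r ^ n) ((m - n : ℤ) * θ) := fun θ => by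
    rw [harmonicMonomial.apply_circleMap_zero, conj_circleMap_zero, circleMap_zero_pow,
      circleMap_zero_mul]
    push_cast
    ring_nf
  have hpi : (Real.pi : ℂ) ≠ 0 := ofReal_ne_zero.2 Real.pi_ne_zero
  simp only [Real.circleAverage_def, hterm, integral_circleMap_zero_int_mul, sub_eq_zero]
  split_ifs with h
  · subst h
    rw [real_smul]
    push_cast
    field_simp
    simp [two_mul, pow_add]
  · exact smul_zero _

section HarmonicSeries

variable {a : ℤ → ℂ} {b : ℕ → ℂ} {f g : ℂ → ℂ} {r : ℝ}

theorem hasSum_circleAverage_prod_mul_conj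
    (hf : ∀ ζ ∈ Metric.sphere (0 : ℂ) |r|, HasSum (fun m => a m * harmonicMonomial m ζ) (f ζ))
    (hg : ∀ ζ ∈ Metric.sphere (0 : ℂ) |r|, HasSum (fun n => b n * ζ ^ n) (g ζ)) :
    HasSum (fun p : ℤ × ℕ => Real.circleAverage
        (fun ζ => a p.1 * harmonicMonomial p.1 ζ * starRingEnd ℂ (b p.2 * ζ ^ p.2)) 0 r)
      (Real.circleAverage (fun ζ => f ζ * starRingEnd ℂ (g ζ)) 0 r) := by
  have hr : (r : ℂ) ∈ Metric.sphere (0 : ℂ) |r| := by simp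
  have hnorm : ∀ p : ℤ × ℕ, ∀ ζ ∈ Metric.sphere (0 : ℂ) |r|,
      ‖a p.1 * harmonicMonomial p.1 ζ * starRingEnd ℂ (b p.2 * ζ ^ p.2)‖ =
        ‖a p.1‖ * |r| ^ p.1.natAbs * (‖b p.2‖ * |r| ^ p.2) := fun p ζ hζ => by
    rw [norm_mul, norm_mul, RCLike.norm_conj, norm_mul, norm_pow, harmonicMonomial.norm_eq,
      mem_sphere_zero_iff_norm.1 hζ]
  have hprod : ∀ ζ ∈ Metric.sphere (0 : ℂ) |r|, HasSum
      (fun p : ℤ × ℕ => a p.1 * harmonicMonomial p.1 ζ * starRingEnd ℂ (b p.2 * ζ ^ p.2))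
      (f ζ * starRingEnd ℂ (g ζ)) := fun ζ hζ => by
    have hconj : HasSum (fun n => starRingEnd ℂ (b n * ζ ^ n)) (starRingEnd ℂ (g ζ)) :=
      hasSum_conj'.2 (hg ζ hζ)
    have hsum := summable_mul_of_summable_norm (hf ζ hζ).summable.norm hconj.summable.norm
    have hmul := (hf ζ hζ).mul hconj hsum
    exact hmul
  refine hasSum_circleAverage (fun p => ?_) (fun p ζ hζ => (hnorm p ζ hζ).le) ?_ hprod
  · refine (Continuous.continuousOn ?_).circleIntegrable'
    have := harmonicMonomial.continuous p.1
    fun_prop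
  · exact (hprod r hr).summable.norm.congr fun p => hnorm p r hr

theorem hasSum_circleAverage_mul_conj
    (hf : ∀ ζ ∈ Metric.sphere (0 : ℂ) |r|, HasSum (fun m => a m * harmonicMonomial m ζ) (f ζ))
    (hg : ∀ ζ ∈ Metric.sphere (0 : ℂ) |r|, HasSum (fun n => b n * ζ ^ n) (g ζ)) :
    HasSum (fun n : ℕ => a n * starRingEnd ℂ (b n) * (r : ℂ) ^ (2 * n))
      (Real.circleAverage (fun ζ => f ζ * starRingEnd ℂ (g ζ)) 0 r) := by
  have hterm : ∀ p : ℤ × ℕ, Real.circleAverage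
      (fun ζ => a p.1 * harmonicMonomial p.1 ζ * starRingEnd ℂ (b p.2 * ζ ^ p.2)) 0 r =
        if p.1 = p.2 then a p.1 * starRingEnd ℂ (b p.2) * (r : ℂ) ^ (2 * p.2) else 0 := by
    rintro ⟨m, n⟩
    have hfactor : ∀ ζ, a m * harmonicMonomial m ζ * starRingEnd ℂ (b n * ζ ^ n) =
        (a m * starRingEnd ℂ (b n)) • (harmonicMonomial m ζ * starRingEnd ℂ ζ ^ n) := fun ζ => by
      rw [map_mul, map_pow, smul_eq_mul]
      ring
    simp only [hfactor]
    rw [Real.circleAverage_fun_smul, circleAverage_harmonicMonomial_mul_conj_pow, smul_eq_mul,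
      mul_ite, mul_zero]
  have hdouble := hasSum_circleAverage_prod_mul_conj hf hg
  simp only [hterm] at hdouble
  have hdiag : Function.Injective fun n : ℕ => ((n : ℤ), n) := fun _ _ h => (Prod.ext_iff.1 h).2
  rw [← hdiag.hasSum_iff fun p hp => if_neg fun h => hp ⟨p.2, Prod.ext h.symm rfl⟩] at hdouble
  simpa only [Function.comp_def, if_true] using hdouble

end HarmonicSeries

namespace IsRadialWeight

variable {ω : ℝ → ℝ} {x ρ q : ℝ}

theorem intervalIntegrable_rpow_mul (hω : IsRadialWeight ω) (hx : 0 ≤ x) :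
    IntervalIntegrable (fun s => s ^ x * ω s) volume 0 1 :=
  ((intervalIntegrable_iff_integrableOn_Ico_of_le zero_le_one).2 hω.2.1).continuousOn_mul
    (Real.continuous_rpow_const hx).continuousOn

theorem rpow_mul_tl_le_mom (hω : IsRadialWeight ω) (hx : 0 ≤ x) (hρ : ρ ∈ Ico (0 : ℝ) 1) :
    ρ ^ x * tl ω ρ ≤ mom ω x := by
  have hρ1 : uIcc ρ 1 ⊆ uIcc 0 1 := uIcc_subset_uIcc_right (by simp [hρ.1, hρ.2.le])
  have h0ρ : uIcc 0 ρ ⊆ uIcc 0 1 := uIcc_subset_uIcc_left (by simp [hρ.1, hρ.2.le])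
  have hint := hω.intervalIntegrable_rpow_mul hx
  have hωint : IntervalIntegrable ω volume 0 1 :=
    (intervalIntegrable_iff_integrableOn_Ico_of_le zero_le_one).2 hω.2.1
  calc ρ ^ x * tl ω ρ = ∫ s in ρ..1, ρ ^ x * ω s := by
        rw [tl, intervalIntegral.integral_const_mul]
    _ ≤ ∫ s in ρ..1, s ^ x * ω s := by
        refine intervalIntegral.integral_mono_on_of_le_Ioo hρ.2.le
          ((hωint.mono_set hρ1).const_mul _) (hint.mono_set hρ1) fun s hs => ?_
        have hs0 : 0 ≤ ω s := hω.1 s ⟨hρ.1.trans hs.1.le, hs.2⟩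
        have := hρ.1
        have := hs.1.le
        gcongr
    _ ≤ (∫ s in 0..ρ, s ^ x * ω s) + ∫ s in ρ..1, s ^ x * ω s :=
        le_add_of_nonneg_left <| intervalIntegral.integral_nonneg hρ.1 fun s hs =>
          mul_nonneg (Real.rpow_nonneg hs.1 x) (hω.1 s ⟨hs.1, hs.2.trans_lt hρ.2⟩)
    _ = mom ω x :=
        intervalIntegral.integral_add_adjacent_intervals (hint.mono_set h0ρ) (hint.mono_set hρ1)

theorem mom_pos (hω : IsRadialWeight ω) (hx : 0 ≤ x) : 0 < mom ω x := by
  have hhalf : (1 / 2 : ℝ) ∈ Ico (0 : ℝ) 1 := by norm_num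
  exact (mul_pos (by positivity) (hω.2.2 _ hhalf)).trans_le (hω.rpow_mul_tl_le_mom hx hhalf)

theorem integral_rpow_mul_div_mom (hω : IsRadialWeight ω) (hx : 0 ≤ x) :
    ∫ s in Ioo (0 : ℝ) 1, s ^ x * ω s / mom ω x = 1 := by
  rw [integral_div, ← integral_Ioc_eq_integral_Ioo, ← intervalIntegral.integral_of_le zero_le_one]
  exact div_self (hω.mom_pos hx).ne'

theorem summable_pow_div_mom (hω : IsRadialWeight ω) (hq0 : 0 ≤ q) (hq1 : q < 1) :
    Summable fun n : ℕ => q ^ n / mom ω (2 * n + 1) := by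
  obtain ⟨ρ, hqρ, hρ1⟩ : ∃ ρ : ℝ, √q < ρ ∧ ρ < 1 :=
    exists_between ((Real.sqrt_lt' one_pos).2 (by simpa using hq1))
  have hρ0 : 0 < ρ := (Real.sqrt_nonneg q).trans_lt hqρ
  have hqρ2 : q / ρ ^ 2 < 1 := (div_lt_one (by positivity)).2 ((Real.sqrt_lt' hρ0).1 hqρ)
  have hρ : ρ ∈ Ico (0 : ℝ) 1 := ⟨hρ0.le, hρ1⟩
  have htl : 0 < tl ω ρ := hω.2.2 ρ hρ
  have hgeom : Summable fun n : ℕ => (q / ρ ^ 2) ^ n / (ρ * tl ω ρ) :=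
    (summable_geometric_of_lt_one (by positivity) hqρ2).div_const _
  refine hgeom.of_nonneg_of_le (fun n => ?_) fun n => ?_
  · have := hω.mom_pos (x := 2 * n + 1) (by positivity)
    positivity
  · have hmom : ρ ^ (2 * n + 1) * tl ω ρ ≤ mom ω (2 * n + 1) := by
      have := hω.rpow_mul_tl_le_mom (x := 2 * n + 1) (by positivity) hρ
      rwa [← Real.rpow_natCast, Nat.cast_add, Nat.cast_mul, Nat.cast_ofNat, Nat.cast_one]
    calc q ^ n / mom ω (2 * n + 1) ≤ q ^ n / (ρ ^ (2 * n + 1) * tl ω ρ) := by gcongr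
      _ = (q / ρ ^ 2) ^ n / (ρ * tl ω ρ) := by
        rw [div_pow, ← pow_mul, pow_succ]
        field_simp

end IsRadialWeight

section BergmanProjection

variable {ω : ℝ → ℝ} {f : ℂ → ℂ} {a : ℤ → ℂ} {z : ℂ}

theorem hasSum_bKer (hω : IsRadialWeight ω) {ζ : ℂ} (hzζ : ‖z‖ * ‖ζ‖ < 1) :
    HasSum (fun n : ℕ => starRingEnd ℂ z ^ n / ((2 * mom ω (2 * n + 1) : ℝ) : ℂ) * ζ ^ n)
      (bKer ω z ζ) := by
  have hnorm : ∀ n : ℕ, ‖(starRingEnd ℂ z * ζ) ^ n / ((2 * mom ω (2 * n + 1) : ℝ) : ℂ)‖ =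
      (‖z‖ * ‖ζ‖) ^ n / mom ω (2 * n + 1) / 2 := fun n => by
    have hmom := hω.mom_pos (x := 2 * n + 1) (by positivity)
    rw [norm_div, norm_pow, norm_mul, RCLike.norm_conj, norm_real,
      Real.norm_of_nonneg (by positivity), div_div, mul_comm 2]
  have hsum := (hω.summable_pow_div_mom (by positivity) hzζ).div_const 2
  have hconv : Summable fun n : ℕ =>
      (starRingEnd ℂ z * ζ) ^ n / ((2 * mom ω (2 * n + 1) : ℝ) : ℂ) :=
    .of_norm (by simpa only [hnorm] using hsum)
  exact hconv.hasSum.congr_fun fun n => by rw [mul_pow, div_mul_eq_mul_div]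

theorem hasSum_circleAverage_bInt (hω : IsRadialWeight ω)
    (hf : ∀ ζ ∈ unitDisc, HasSum (fun m => a m * harmonicMonomial m ζ) (f ζ))
    (hz : z ∈ unitDisc) {r : ℝ} (hr : r ∈ Ico (0 : ℝ) 1) :
    HasSum (fun n : ℕ => (r ^ (2 * n) * ω r / (2 * mom ω (2 * n + 1))) • (a n * z ^ n))
      (Real.circleAverage (bInt ω f z) 0 r) := by
  have hsphere : ∀ ζ ∈ Metric.sphere (0 : ℂ) |r|, ‖ζ‖ = r := fun ζ hζ => by
    rw [mem_sphere_zero_iff_norm.1 hζ, abs_of_nonneg hr.1]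
  have hz1 : ‖z‖ < 1 := mem_ball_zero_iff.1 hz
  have havg := hasSum_circleAverage_mul_conj (r := r)
    (fun ζ hζ => hf ζ (mem_ball_zero_iff.2 ((hsphere ζ hζ).trans_lt hr.2)))
    (fun ζ hζ => hasSum_bKer (z := z) hω (by
      rw [hsphere ζ hζ]
      exact mul_lt_one_of_nonneg_of_lt_one_left (norm_nonneg z) hz1 hr.2.le))
  have hbInt : EqOn (bInt ω f z)
      (fun ζ => (ω r : ℂ) • (f ζ * starRingEnd ℂ (bKer ω z ζ))) (Metric.sphere 0 |r|) :=
    fun ζ hζ => by simp only [bInt, hsphere ζ hζ, smul_eq_mul, mul_comm]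
  rw [Real.circleAverage_congr_sphere hbInt, Real.circleAverage_fun_smul]
  convert havg.const_smul (ω r : ℂ) using 2 with n
  simp only [map_div₀, map_pow, conj_conj, conj_ofReal, real_smul, smul_eq_mul]
  push_cast
  ring

theorem bProj_eq_integral_circleAverage (hi : IntegrableOn (bInt ω f z) unitDisc) :
    bProj ω f z = ∫ r in Ioo (0 : ℝ) 1, (2 * r) • Real.circleAverage (bInt ω f z) 0 r := by
  simp only [bProj, unitDisc, integral_ball_eq_integral_circleAverage hi, mul_smul, integral_smul]
  rw [smul_comm, ← ofReal_inv, ← real_smul, inv_smul_smul₀ Real.pi_ne_zero]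

theorem bProj_eq_tsum_of_hasSum_harmonicMonomial (hω : IsRadialWeight ω)
    (hf : ∀ ζ ∈ unitDisc, HasSum (fun m => a m * harmonicMonomial m ζ) (f ζ))
    (hz : z ∈ unitDisc) (hi : IntegrableOn (bInt ω f z) unitDisc) :
    bProj ω f z = ∑' n : ℕ, a n * z ^ n := by
  have hexp : ∀ n : ℕ, (0 : ℝ) ≤ 2 * n + 1 := fun n => by positivity
  have hsum : Summable fun n : ℕ => ‖a n * z ^ n‖ := by
    simpa only [Function.comp_def, harmonicMonomial.natCast] using
      (hf z hz).summable.norm.comp_injective Nat.cast_injective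
  have hradial : ∀ r ∈ Ioo (0 : ℝ) 1, (2 * r) • Real.circleAverage (bInt ω f z) 0 r =
      ∑' n : ℕ, (r ^ (2 * n + 1 : ℝ) * ω r / mom ω (2 * n + 1)) • (a n * z ^ n) := by
    intro r hr
    have havg := hasSum_circleAverage_bInt hω hf hz ⟨hr.1.le, hr.2⟩
    rw [← (havg.const_smul (2 * r)).tsum_eq]
    refine tsum_congr fun n => ?_
    have hpow : r ^ (2 * n + 1 : ℝ) = r ^ (2 * n) * r := by
      rw [Real.rpow_add_one hr.1.ne']
      exact_mod_cast congrArg (· * r) (Real.rpow_natCast r (2 * n))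
    have hmom := (hω.mom_pos (hexp n)).ne'
    rw [smul_smul, hpow]
    congr 1
    field_simp
  rw [bProj_eq_integral_circleAverage hi, setIntegral_congr_fun measurableSet_Ioo hradial]
  refine integral_tsum_smul_of_integral_eq_one (fun n => ?_)
    (fun n => hω.integral_rpow_mul_div_mom (hexp n)) hsum
  filter_upwards [ae_restrict_mem measurableSet_Ioo] with r hr
  exact div_nonneg (mul_nonneg (Real.rpow_nonneg hr.1.le _) (hω.1 r ⟨hr.1.le, hr.2⟩))
    (hω.mom_pos (hexp n)).le

end BergmanProjection

theorem stmt11_general (ω v : ℝ → ℝ) (hω : IsRadialWeight ω) (hb : ProjBddH ω v) :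
    ∃ C : ℝ, 0 < C ∧ ∀ (f : ℂ → ℂ) (a : ℤ → ℂ),
      AEStronglyMeasurable f (volume.restrict unitDisc) →
      wSup v f < ⊤ →
      (∀ z ∈ unitDisc, HasSum (fun m : ℤ =>
        a m * (if 0 ≤ m then z ^ m.toNat else (starRingEnd ℂ z) ^ (-m).toNat))
        (f z)) →
      (∀ z ∈ unitDisc, bProj ω f z = ∑' n : ℕ, a (n : ℤ) * z ^ n) ∧
      wSup v (bProj ω f) ≤ ENNReal.ofReal C * wSup v f := by
  obtain ⟨C, hC, hproj⟩ := hb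
  refine ⟨C, hC, fun f a hmeas hfin hseries => ?_⟩
  obtain ⟨hint, -, hbound⟩ := hproj f hmeas hfin
  exact ⟨fun z hz => bProj_eq_tsum_of_hasSum_harmonicMonomial hω hseries hz (hint z hz), hbound⟩

/-- Proposition 3.1: if `P_ω : L^∞_ν̂ → H^∞_ν̂` is bounded, then for every
harmonic `f ∈ L^∞_ν̂` with series representation
`f(z) = Σ_{m∈ℤ} a_m r^{|m|} e^{imθ}`, one has `P_ω f(z) = Σ_{n≥0} a_n z^n`,
i.e. `P_ω` restricted to harmonic functions is the Szegő projection; in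
particular the Szegő projection is bounded from `h^∞_ν̂` to `H^∞_ν̂`. -/
theorem stmt11 (ω ν : ℝ → ℝ) (hω : IsRadialWeight ω) (hν : IsRadialWeight ν)
    (hb : ProjBddH ω (tl ν)) :
    ∃ C : ℝ, 0 < C ∧ ∀ (f : ℂ → ℂ) (a : ℤ → ℂ),
      AEStronglyMeasurable f (volume.restrict unitDisc) →
      wSup (tl ν) f < ⊤ →
      (∀ z ∈ unitDisc, HasSum (fun m : ℤ =>
        a m * (if 0 ≤ m then z ^ m.toNat else (starRingEnd ℂ z) ^ (-m).toNat))
        (f z)) →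
      (∀ z ∈ unitDisc, bProj ω f z = ∑' n : ℕ, a (n : ℤ) * z ^ n) ∧
      wSup (tl ν) (bProj ω f) ≤ ENNReal.ofReal C * wSup (tl ν) f := by
  exact stmt11_general ω (tl ν) hω hb
end
end
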